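/- Let f ∈ 𝒮(S^m) be a symmetric m-tensor field on ℝⁿ with Schwartz components, and let 1 ≤ k ≤ min{n−1, m}. Then there exist uniquely determined smooth symmetric tensor fields g ∈ C^∞(S^m) and v ∈ C^∞(S^{m−k}) such that f = g + d^k v, δ^k g = 0, and g(x) → 0, v(x) → 0 as |x| → ∞. Moreover there is a constant C such that |g(x)| ≤ C(1+|x|)^{1−n} and |d^ℓ v(x)| ≤ C(1+|x|)^{k+1−ℓ−n} for every 0 ≤ ℓ ≤ k and all x ∈ ℝⁿ. -/

import Mathlib

noncomputable section

open MeasureTheory Filter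
open scoped RealInnerProductSpace BigOperators

/-- `ℝⁿ` with the Euclidean structure. -/
abbrev En (n : ℕ) := EuclideanSpace ℝ (Fin n)

/-- A symmetric `m`-tensor on `ℝⁿ` (pointwise): a family of reals indexed by
`(i₁,…,i_m)`, invariant under permutations of the indices. -/
def IsSymTensor {n m : ℕ} (F : (Fin m → Fin n) → ℝ) : Prop :=
  ∀ (π : Equiv.Perm (Fin m)) (i : Fin m → Fin n), F (i ∘ π) = F i

/-- A symmetric `m`-tensor field on `ℝⁿ`. -/
def IsSymField {n m : ℕ} (f : (Fin m → Fin n) → En n → ℝ) : Prop :=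
  ∀ (π : Equiv.Perm (Fin m)) (i : Fin m → Fin n), f (i ∘ π) = f i

/-- All components of the field are Schwartz functions. -/
def IsSchwartzField {n m : ℕ} (f : (Fin m → Fin n) → En n → ℝ) : Prop :=
  ∀ i, ∃ φ : SchwartzMap (En n) ℝ, ⇑φ = f i

/-- Symmetrization `σ` of a tensor: average over all permutations of the indices. -/
def symz {n m : ℕ} {α : Type*} [AddCommMonoid α] [Module ℝ α]
    (F : (Fin m → Fin n) → α) : (Fin m → Fin n) → α :=
  fun i => ((m.factorial : ℝ))⁻¹ • ∑ π : Equiv.Perm (Fin m), F (i ∘ π)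

/-- The `q`-th momentum ray transform
`(J^q f)(x,ξ) = ∫ t^q f_{i₁…i_m}(x+tξ) ξ^{i₁}⋯ξ^{i_m} dt`, as a function on all of
`ℝⁿ × ℝⁿ`; its restriction to `TSⁿ⁻¹ = {|ξ|=1, ⟨x,ξ⟩=0}` is `I^q f`. -/
def momRT {n m : ℕ} (q : ℕ) (f : (Fin m → Fin n) → En n → ℝ) (x ξ : En n) : ℝ :=
  ∫ t : ℝ, t ^ q * ∑ i : Fin m → Fin n, f i (x + t • ξ) * ∏ r, ξ (i r)

/-- Coordinate partial derivative `∂/∂x^j`. -/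
def pd {n : ℕ} (j : Fin n) (u : En n → ℝ) : En n → ℝ :=
  fun x => fderiv ℝ u x (EuclideanSpace.single j 1)

/-- Inner differentiation (symmetrized derivative) `d`. -/
def dsym {n m : ℕ} (u : (Fin m → Fin n) → En n → ℝ) :
    (Fin (m + 1) → Fin n) → En n → ℝ :=
  symz (fun i => pd (i (Fin.last m)) (u (fun s => i s.castSucc)))

/-- Iterated inner differentiation `d^k`. -/
def dpow {n m : ℕ} : (k : ℕ) → ((Fin m → Fin n) → En n → ℝ) →
    (Fin (m + k) → Fin n) → En n → ℝ
  | 0, u => u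
  | k + 1, u => dsym (dpow k u)

/-- Divergence `δ`. -/
def divg {n m : ℕ} (u : (Fin (m + 1) → Fin n) → En n → ℝ) :
    (Fin m → Fin n) → En n → ℝ :=
  fun i x => ∑ j : Fin n, pd j (u (Fin.snoc i j)) x

/-- Iterated divergence `δ^k`. -/
def divpow {n : ℕ} : (k : ℕ) → {p : ℕ} → ((Fin (p + k) → Fin n) → En n → ℝ) →
    (Fin p → Fin n) → En n → ℝ
  | 0, _, u => u
  | k + 1, _, u => divpow k (divg u)

/-- Partial derivative `∂/∂x^j` in the first slot of a function of `(x, ξ)`. -/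
def pdx {n : ℕ} (j : Fin n) (F : En n → En n → ℝ) : En n → En n → ℝ :=
  fun x ξ => fderiv ℝ (fun x' => F x' ξ) x (EuclideanSpace.single j 1)

/-- Partial derivative `∂/∂ξ^j` in the second slot of a function of `(x, ξ)`. -/
def pdxi {n : ℕ} (j : Fin n) (F : En n → En n → ℝ) : En n → En n → ℝ :=
  fun x ξ => fderiv ℝ (fun ξ' => F x ξ') ξ (EuclideanSpace.single j 1)

/-- Iterated `∂x` derivatives along a list of indices. -/
def pdxList {n : ℕ} (l : List (Fin n)) (F : En n → En n → ℝ) : En n → En n → ℝ :=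
  l.foldr pdx F

/-- Iterated `∂ξ` derivatives along a list of indices. -/
def pdxiList {n : ℕ} (l : List (Fin n)) (F : En n → En n → ℝ) : En n → En n → ℝ :=
  l.foldr pdxi F

/-- The John operator `J_{ij} = ∂²/∂x^i∂ξ^j − ∂²/∂x^j∂ξ^i`. -/
def johnOp {n : ℕ} (i j : Fin n) (F : En n → En n → ℝ) : En n → En n → ℝ :=
  fun x ξ => pdx i (pdxi j F) x ξ - pdx j (pdxi i F) x ξ

/-- Iterated John operators `J_{i₁j₁} ⋯ J_{i_r j_r}`. -/
def johnIter {n : ℕ} (l : List (Fin n × Fin n)) (F : En n → En n → ℝ) : En n → En n → ℝ :=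
  l.foldr (fun ij G => johnOp ij.1 ij.2 G) F

/-- Sharafutdinov's Schwartz space `𝒮(TSⁿ⁻¹)`: a function on
`TSⁿ⁻¹ = {(x,ξ) : |ξ|=1, ⟨x,ξ⟩=0}` is Schwartz iff it is the restriction of a
Schwartz function on `ℝⁿ × ℝⁿ`. -/
def IsSchwartzOnTS {n : ℕ} (φ : En n → En n → ℝ) : Prop :=
  ∃ Φ : SchwartzMap (En n × En n) ℝ, ∀ x ξ : En n, ‖ξ‖ = 1 → ⟪x, ξ⟫ = 0 → φ x ξ = Φ (x, ξ)

/-- Symmetric multiplication `i_{x^{⊗k}} : S^m → S^{m+k}`. -/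
def iPowTens {n m k : ℕ} (x : En n) (V : (Fin m → Fin n) → ℝ) :
    (Fin (m + k) → Fin n) → ℝ :=
  symz (fun i => (∏ r : Fin k, x (i (Fin.natAdd m r))) * V (fun s => i (Fin.castAdd k s)))

/-- Convolution (contraction) `j_{x^{⊗k}} : S^{m+k} → S^m`. -/
def jPowTens {n m k : ℕ} (x : En n) (F : (Fin (m + k) → Fin n) → ℝ) :
    (Fin m → Fin n) → ℝ :=
  fun i => ∑ j : Fin k → Fin n, (∏ r, x (j r)) * F (Fin.append i j)

/-- Euclidean norm of a tensor. -/
def tensNorm {n m : ℕ} (F : (Fin m → Fin n) → ℝ) : ℝ :=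
  Real.sqrt (∑ i, (F i) ^ 2)

/-!
Applying `δ^k` to `f = g + d^k v` turns the decomposition into the normal equation
`δ^k d^k v = δ^k f`. The commutation formula `(m + 1) δ d = Δ + m d δ` on `S^m` yields an explicit
constant coefficient operator whose composition with `δ^k d^k` is `Δ^{k(m + 1)}`. Hence, on the
Fourier side, `v̂` is the Fourier transform of a Schwartz field multiplied by rational functions,
homogeneous of degree `-k` and smooth away from the origin. For `k < n` these are integrable, and
cutting them off near the origin, with bounds uniform in the cutoff, before integrating by parts
shows that a singularity of degree `s > -n` at the origin produces decay `|x|^{1-n-s}` of the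
inverse transform. Each derivative raises the degree by one, which gives the decay of `d^ℓ v`.

The difference of two potentials satisfies `δ^k d^k v = 0`, so it is polyharmonic. If it also tends
to zero at infinity, so do its mollifications together with all their derivatives, and the maximum
principle removes the Laplacians one at a time.
-/

section Tensors

/-- Symmetric tensors of rank `m` on `ℝⁿ` with coefficients in `V`, encoded by their components. -/
def SymTensor (n : ℕ) (V : Type*) [AddCommGroup V] [Module ℝ V] (m : ℕ) :
    Submodule ℝ ((Fin m → Fin n) → V) where
  carrier := {F | ∀ (π : Equiv.Perm (Fin m)) (i : Fin m → Fin n), F (i ∘ π) = F i}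
  add_mem' ha hb π i := by simp [ha π i, hb π i]
  zero_mem' _ _ := rfl
  smul_mem' c a ha π i := by simp [ha π i]

namespace SymTensor

variable {n m : ℕ} {V V' : Type*} [AddCommGroup V] [Module ℝ V] [AddCommGroup V'] [Module ℝ V']

@[ext]
theorem ext {u v : SymTensor n V m} (h : ∀ i, u.1 i = v.1 i) : u = v :=
  Subtype.ext (funext h)

theorem symz_mem (F : (Fin m → Fin n) → V) : symz F ∈ SymTensor n V m := fun π _ =>
  congrArg (_ • ·) (Fintype.sum_equiv (Equiv.mulLeft π) _ _ fun _ => rfl)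

theorem snoc_comp_perm (i : Fin m → Fin n) (j : Fin n) (π : Equiv.Perm (Fin m)) :
    ∃ π' : Equiv.Perm (Fin (m + 1)),
      (Fin.snoc (i ∘ π) j : Fin (m + 1) → Fin n) = (Fin.snoc i j : Fin (m + 1) → Fin n) ∘ π' := by
  refine ⟨⟨Fin.lastCases (Fin.last m) fun s => (π s).castSucc,
    Fin.lastCases (Fin.last m) fun s => (π.symm s).castSucc, fun x => ?_, fun x => ?_⟩,
    funext fun x => ?_⟩ <;> refine Fin.lastCases ?_ (fun s => ?_) x <;> simp

/-- The tensor obtained by applying a linear map to every component. -/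
def map (T : V →ₗ[ℝ] V') : SymTensor n V m →ₗ[ℝ] SymTensor n V' m where
  toFun u := ⟨fun i => T (u.1 i), fun π i => congrArg T (u.2 π i)⟩
  map_add' u v := by ext i; simp
  map_smul' c u := by ext i; simp

@[simp]
theorem map_apply (T : V →ₗ[ℝ] V') (u : SymTensor n V m) (i : Fin m → Fin n) :
    (map T u).1 i = T (u.1 i) :=
  rfl

/-- The tensor with coefficients in `W` whose components are those of a tensor with coefficients in
an ambient space. -/
def codRestrict (W : Submodule ℝ V) (u : SymTensor n V m) (hu : ∀ i, u.1 i ∈ W) :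
    SymTensor n W m :=
  ⟨fun i => ⟨u.1 i, hu i⟩, fun π i => Subtype.ext (u.2 π i)⟩

variable (D : Fin n → Module.End ℝ V)

/-- The inner differentiation with respect to abstract partial derivatives `D j`. -/
def d : SymTensor n V m →ₗ[ℝ] SymTensor n V (m + 1) where
  toFun u := ⟨symz fun i => D (i (Fin.last m)) (u.1 fun s => i s.castSucc), symz_mem _⟩
  map_add' u v := by ext i; simp [symz, Finset.sum_add_distrib]
  map_smul' c u := by ext i; simp [symz, Finset.smul_sum, smul_comm c]

/-- The divergence with respect to abstract partial derivatives `D j`. -/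
def div : SymTensor n V (m + 1) →ₗ[ℝ] SymTensor n V m where
  toFun u := ⟨fun i => ∑ j, D j (u.1 (Fin.snoc i j)), fun π i =>
    Finset.sum_congr rfl fun j _ => by
      obtain ⟨π', h⟩ := snoc_comp_perm i j π
      rw [h, u.2]⟩
  map_add' u v := by ext i; simp [Finset.sum_add_distrib]
  map_smul' c u := by ext i; simp [Finset.smul_sum]

/-- The iterated inner differentiation `d^k`. -/
def dPow : (k : ℕ) → SymTensor n V m →ₗ[ℝ] SymTensor n V (m + k)
  | 0 => LinearMap.id
  | k + 1 => d D ∘ₗ dPow k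

/-- The iterated divergence `δ^k`. -/
def divPow : (k : ℕ) → {m : ℕ} → SymTensor n V (m + k) →ₗ[ℝ] SymTensor n V m
  | 0, _ => LinearMap.id
  | k + 1, _ => divPow k ∘ₗ div D

theorem div_apply (u : SymTensor n V (m + 1)) (i : Fin m → Fin n) :
    (div D u).1 i = ∑ j, D j (u.1 (Fin.snoc i j)) :=
  rfl

theorem dPow_zero (u : SymTensor n V m) : dPow D 0 u = u :=
  rfl

theorem dPow_succ (k : ℕ) (u : SymTensor n V m) : dPow D (k + 1) u = d D (dPow D k u) :=
  rfl

theorem divPow_zero (u : SymTensor n V m) : divPow D 0 u = u :=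
  rfl

theorem divPow_succ {k : ℕ} (u : SymTensor n V (m + (k + 1))) :
    divPow D (k + 1) u = divPow D k (div D u) :=
  rfl

theorem inv_factorial_smul_sum_perm (H : Fin (m + 1) → V) (s : Fin (m + 1)) :
    (((m + 1).factorial : ℝ))⁻¹ • ∑ π : Equiv.Perm (Fin (m + 1)), H (π s)
      = ((m : ℝ) + 1)⁻¹ • ∑ r, H r := by
  have sum_eq (t) : ∑ π : Equiv.Perm (Fin (m + 1)), H (π t)
      = ∑ π : Equiv.Perm (Fin (m + 1)), H (π s) :=
    Fintype.sum_equiv (Equiv.mulRight (Equiv.swap t s)) _ _ fun σ => by simp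
  have double_sum : ((m : ℝ) + 1) • ∑ π : Equiv.Perm (Fin (m + 1)), H (π s)
      = ((m + 1).factorial : ℝ) • ∑ r, H r := by
    calc ((m : ℝ) + 1) • ∑ π : Equiv.Perm (Fin (m + 1)), H (π s)
        = ∑ t, ∑ π : Equiv.Perm (Fin (m + 1)), H (π t) := by
          simp [sum_eq, ← Nat.cast_smul_eq_nsmul ℝ]
      _ = ∑ π : Equiv.Perm (Fin (m + 1)), ∑ r, H r := by
          rw [Finset.sum_comm]
          exact Finset.sum_congr rfl fun π _ => Equiv.sum_comp π H
      _ = ((m + 1).factorial : ℝ) • ∑ r, H r := by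
          simp [Fintype.card_perm, ← Nat.cast_smul_eq_nsmul ℝ]
  have hf : ((m + 1).factorial : ℝ) ≠ 0 := by positivity
  have hm : (m : ℝ) + 1 ≠ 0 := by positivity
  rw [inv_smul_eq_iff₀ hf, smul_comm, ← double_sum, inv_smul_smul₀ hm]

theorem exists_perm_succAbove (π : Equiv.Perm (Fin (m + 1))) :
    ∃ τ : Equiv.Perm (Fin m), ∀ s, (π (Fin.last m)).succAbove (τ s) = π s.castSucc := by
  have hex (s : Fin m) : ∃ t, (π (Fin.last m)).succAbove t = π s.castSucc :=
    Fin.exists_succAbove_eq fun h => (Fin.castSucc_lt_last s).ne (π.injective h)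
  choose t ht using hex
  have ht_inj : Function.Injective t := fun a b hab =>
    Fin.castSucc_injective m (π.injective (by rw [← ht a, ← ht b, hab]))
  exact ⟨Equiv.ofBijective t (Finite.injective_iff_bijective.mp ht_inj), ht⟩

theorem d_apply (u : SymTensor n V m) (i : Fin (m + 1) → Fin n) :
    (d D u).1 i = ((m : ℝ) + 1)⁻¹ • ∑ r, D (i r) (u.1 (i ∘ r.succAbove)) := by
  rw [← inv_factorial_smul_sum_perm (fun r => D (i r) (u.1 (i ∘ r.succAbove))) (Fin.last m)]
  refine congrArg (_ • ·) (Finset.sum_congr rfl fun π _ => ?_)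
  obtain ⟨τ, hτ⟩ := exists_perm_succAbove π
  rw [← u.2 τ]
  simp [Function.comp_def, hτ]

theorem d_snoc (u : SymTensor n V (m + 1)) (i : Fin (m + 1) → Fin n) (j : Fin n) :
    ((m : ℝ) + 2) • (d D u).1 (Fin.snoc i j)
      = D j (u.1 i) + ∑ r, D (i r) (u.1 (Fin.snoc (i ∘ r.succAbove) j)) := by
  have hlast : (Fin.snoc i j : Fin (m + 2) → Fin n) ∘ (Fin.last (m + 1)).succAbove = i := by
    ext s; simp
  have hcast (r : Fin (m + 1)) : (Fin.snoc i j : Fin (m + 2) → Fin n) ∘ r.castSucc.succAbove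
      = Fin.snoc (i ∘ r.succAbove) j := by
    funext s
    refine Fin.lastCases ?_ (fun s => ?_) s <;> simp
  have hm : (m : ℝ) + 2 = (m + 1 : ℕ) + 1 := by push_cast; ring
  rw [d_apply, hm, smul_inv_smul₀ (by positivity), Fin.sum_univ_castSucc, add_comm]
  simp only [Fin.snoc_last, Fin.snoc_castSucc, hlast, hcast]

section Intertwining

variable {D} {D' : Fin n → Module.End ℝ V'} {T : V →ₗ[ℝ] V'}

theorem map_d (hT : ∀ j v, T (D j v) = D' j (T v)) (u : SymTensor n V m) :
    map T (d D u) = d D' (map T u) := by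
  ext i
  simp [d_apply, hT]

theorem map_div (hT : ∀ j v, T (D j v) = D' j (T v)) (u : SymTensor n V (m + 1)) :
    map T (div D u) = div D' (map T u) := by
  ext i
  simp [div_apply, hT]

theorem map_dPow (hT : ∀ j v, T (D j v) = D' j (T v)) (k : ℕ) (u : SymTensor n V m) :
    map T (dPow D k u) = dPow D' k (map T u) := by
  induction k with
  | zero => rfl
  | succ k ih => rw [dPow_succ, map_d hT, ih, dPow_succ]

theorem map_divPow (hT : ∀ j v, T (D j v) = D' j (T v)) (k : ℕ) (u : SymTensor n V (m + k)) :
    map T (divPow D k u) = divPow D' k (map T u) := by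
  induction k with
  | zero => rfl
  | succ k ih => rw [divPow_succ, ih, map_div hT, divPow_succ]

end Intertwining

theorem map_mul_apply (S T : Module.End ℝ V) (u : SymTensor n V m) :
    map (S * T) u = map S (map T u) :=
  rfl

/-- The Laplacian `∑ⱼ Dⱼ²` on the coefficients. -/
def lap : Module.End ℝ V :=
  ∑ j, D j ^ 2

/-- The operator `m d δ` on tensors of rank `m`. -/
def dDiv : (m : ℕ) → Module.End ℝ (SymTensor n V m)
  | 0 => 0
  | m + 1 => ((m : ℝ) + 1) • (d (m := m) D ∘ₗ div D)

/-- The elliptic operator `c Δ + m d δ` on tensors of rank `m`. -/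
def lapAddDDiv (c : ℝ) (m : ℕ) : Module.End ℝ (SymTensor n V m) :=
  c • map (lap D) + dDiv D m

theorem lapAddDDiv_add_one (c : ℝ) (u : SymTensor n V m) :
    lapAddDDiv D (c + 1) m u = c • map (lap D) u + (map (lap D) u + dDiv D m u) := by
  simp [lapAddDDiv, add_smul, add_assoc]

/-- The adjugate of `c Δ + m d δ`, a differential operator of order `2m` whose composition with
`c Δ + m d δ` is `Δ^(m+1)`. -/
def adj : (m : ℕ) → (c : ℝ) → Module.End ℝ (SymTensor n V m)
  | 0, c => c⁻¹ • LinearMap.id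
  | m + 1, c => c⁻¹ •
      (map (lap D ^ (m + 1)) - ((m : ℝ) + 1) • (d (m := m) D ∘ₗ adj m (c + 1) ∘ₗ div D))

/-- The adjugate of `δ^k d^k` on tensors of rank `m`, a differential operator of order `2mk` whose
composition with `δ^k d^k` is `Δ^(k(m+1))`. -/
def divDAdj (m : ℕ) : (k : ℕ) → Module.End ℝ (SymTensor n V m)
  | 0 => LinearMap.id
  | k + 1 => ((m : ℝ) + k + 1) • (adj D m (k + 1) ∘ₗ divDAdj m k)

section Commuting

variable {D} (hD : ∀ i j, Commute (D i) (D j))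
include hD

theorem commute_lap (j : Fin n) : Commute (lap D) (D j) :=
  Commute.sum_left _ _ _ fun i _ => (hD i j).pow_left 2

theorem map_lap_pow_d (N : ℕ) (u : SymTensor n V m) :
    map (lap D ^ N) (d D u) = d D (map (lap D ^ N) u) :=
  map_d (fun j v => LinearMap.congr_fun ((commute_lap hD j).pow_left N).eq v) u

theorem map_lap_pow_div (N : ℕ) (u : SymTensor n V (m + 1)) :
    map (lap D ^ N) (div D u) = div D (map (lap D ^ N) u) :=
  map_div (fun j v => LinearMap.congr_fun ((commute_lap hD j).pow_left N).eq v) u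

theorem map_lap_pow_dPow (N k : ℕ) (u : SymTensor n V m) :
    map (lap D ^ N) (dPow D k u) = dPow D k (map (lap D ^ N) u) :=
  map_dPow (fun j v => LinearMap.congr_fun ((commute_lap hD j).pow_left N).eq v) k u

theorem map_lap_pow_divPow (N k : ℕ) (u : SymTensor n V (m + k)) :
    map (lap D ^ N) (divPow D k u) = divPow D k (map (lap D ^ N) u) :=
  map_divPow (fun j v => LinearMap.congr_fun ((commute_lap hD j).pow_left N).eq v) k u

theorem div_d (u : SymTensor n V m) :
    ((m : ℝ) + 1) • div D (d D u) = map (lap D) u + dDiv D m u := by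
  cases m with
  | zero =>
    ext i
    have hsnoc (j : Fin n) : (Fin.snoc i j : Fin 1 → Fin n) 0 = j := rfl
    simp [div_apply, d_apply, lap, dDiv, pow_two, hsnoc, Subsingleton.elim _ i]
  | succ m =>
    ext i
    have hdiv : ((m : ℝ) + 2) • (div D (d D u)).1 i
        = ∑ j, D j (D j (u.1 i)) + ∑ r, D (i r) ((div D u).1 (i ∘ r.succAbove)) := by
      simp only [div_apply, Finset.smul_sum, ← map_smul, d_snoc, map_add, map_sum,
        Finset.sum_add_distrib]
      rw [Finset.sum_comm (s := Finset.univ) (t := Finset.univ)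
        (f := fun j r => D j (D (i r) (u.1 (Fin.snoc (i ∘ r.succAbove) j))))]
      simp only [← Module.End.mul_apply, (hD _ _).eq]
    have hd : ∑ r, D (i r) ((div D u).1 (i ∘ r.succAbove)) = (dDiv D (m + 1) u).1 i := by
      simp only [dDiv, LinearMap.smul_apply, LinearMap.comp_apply, Submodule.coe_smul,
        Pi.smul_apply, d_apply]
      rw [smul_inv_smul₀ (by positivity)]
    rw [hd] at hdiv
    simpa [lap, pow_two, add_assoc, one_add_one_eq_two] using hdiv

theorem map_lap_pow_lapAddDDiv (N : ℕ) (c : ℝ) (u : SymTensor n V m) :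
    map (lap D ^ N) (lapAddDDiv D c m u) = lapAddDDiv D c m (map (lap D ^ N) u) := by
  have hlap (u : SymTensor n V m) :
      map (lap D ^ N) (map (lap D) u) = map (lap D) (map (lap D ^ N) u) := by
    rw [← map_mul_apply, ← map_mul_apply, ← pow_succ, pow_succ']
  cases m with
  | zero => simp [lapAddDDiv, dDiv, hlap]
  | succ m => simp [lapAddDDiv, dDiv, hlap, map_lap_pow_d hD, map_lap_pow_div hD]

theorem lapAddDDiv_d (c : ℝ) (u : SymTensor n V m) :
    lapAddDDiv D c (m + 1) (d D u) = d D (lapAddDDiv D (c + 1) m u) := by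
  have hlap := map_lap_pow_d hD 1 u
  rw [lapAddDDiv_add_one, ← div_d hD]
  simp_all [lapAddDDiv, dDiv]

theorem div_lapAddDDiv (c : ℝ) (u : SymTensor n V (m + 1)) :
    div D (lapAddDDiv D c (m + 1) u) = lapAddDDiv D (c + 1) m (div D u) := by
  have hlap := map_lap_pow_div hD 1 u
  rw [lapAddDDiv_add_one, ← div_d hD]
  simp_all [lapAddDDiv, dDiv]

theorem lapAddDDiv_dPow (k : ℕ) (c : ℝ) (u : SymTensor n V m) :
    lapAddDDiv D c (m + k) (dPow D k u) = dPow D k (lapAddDDiv D (c + k) m u) := by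
  induction k generalizing c with
  | zero => simp [dPow]
  | succ k ih =>
    have hc : c + (k + 1 : ℕ) = c + 1 + k := by push_cast; ring
    rw [dPow_succ, dPow_succ, hc, ← ih]
    exact lapAddDDiv_d hD c _

theorem lapAddDDiv_adj {c : ℝ} (hc : 0 < c) (u : SymTensor n V m) :
    lapAddDDiv D c m (adj D m c u) = map (lap D ^ (m + 1)) u := by
  induction m generalizing c with
  | zero => simp [lapAddDDiv, dDiv, adj, hc.ne']
  | succ m ih =>
    simp only [adj, LinearMap.smul_apply, LinearMap.sub_apply, LinearMap.comp_apply, map_smul,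
      map_sub, lapAddDDiv_d hD]
    rw [ih (by positivity), map_lap_pow_div hD, inv_smul_eq_iff₀ hc.ne', pow_succ' _ (m + 1),
      map_mul_apply]
    simp [lapAddDDiv, dDiv]

theorem adj_lapAddDDiv {c : ℝ} (hc : 0 < c) (u : SymTensor n V m) :
    adj D m c (lapAddDDiv D c m u) = map (lap D ^ (m + 1)) u := by
  induction m generalizing c with
  | zero => simp [lapAddDDiv, dDiv, adj, hc.ne']
  | succ m ih =>
    simp only [adj, LinearMap.smul_apply, LinearMap.sub_apply, LinearMap.comp_apply,
      div_lapAddDDiv hD]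
    rw [ih (by positivity), map_lap_pow_div hD, map_lap_pow_lapAddDDiv hD, inv_smul_eq_iff₀ hc.ne',
      pow_succ' _ (m + 1), map_mul_apply]
    simp [lapAddDDiv, dDiv]

theorem divPow_dPow_succ (k : ℕ) (u : SymTensor n V m) :
    ((m : ℝ) + k + 1) • divPow D (k + 1) (dPow D (k + 1) u)
      = divPow D k (dPow D k (lapAddDDiv D (k + 1) m u)) := by
  have h := div_d hD (dPow D k u)
  rw [Nat.cast_add] at h
  have hE := lapAddDDiv_dPow hD k 1 u
  rw [divPow_succ, dPow_succ, ← map_smul, h, add_comm (k : ℝ), ← hE]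
  simp [lapAddDDiv]

theorem divDAdj_divPow_dPow (k : ℕ) (u : SymTensor n V m) :
    divDAdj D m k (divPow D k (dPow D k u)) = map (lap D ^ (k * (m + 1))) u := by
  induction k generalizing u with
  | zero => simp [divDAdj, divPow_zero, dPow_zero, SymTensor.ext_iff]
  | succ k ih =>
    rw [divDAdj, LinearMap.smul_apply, LinearMap.comp_apply, ← map_smul, ← map_smul,
      divPow_dPow_succ hD, ih, map_lap_pow_lapAddDDiv hD, adj_lapAddDDiv hD (by positivity),
      ← map_mul_apply, ← pow_add]
    congr 3
    ring

theorem divPow_dPow_divDAdj (k : ℕ) (u : SymTensor n V m) :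
    divPow D k (dPow D k (divDAdj D m k u)) = map (lap D ^ (k * (m + 1))) u := by
  induction k generalizing u with
  | zero => simp [divDAdj, divPow_zero, dPow_zero, SymTensor.ext_iff]
  | succ k ih =>
    simp only [divDAdj, LinearMap.smul_apply, LinearMap.comp_apply, map_smul]
    rw [divPow_dPow_succ hD, lapAddDDiv_adj hD (by positivity), ← map_lap_pow_dPow hD,
      ← map_lap_pow_divPow hD, ih, ← map_mul_apply, ← pow_add]
    congr 3
    ring

end Commuting

section Order

variable {D} (W : ℤ → Submodule ℝ V)

/-- All components of the tensor lie in the stage `W s` of a filtration of the coefficients. -/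
def HasOrder (s : ℤ) (u : SymTensor n V m) : Prop :=
  ∀ i, u.1 i ∈ W s

variable {W} {s : ℤ}

theorem HasOrder.sub {u v : SymTensor n V m} (hu : HasOrder W s u) (hv : HasOrder W s v) :
    HasOrder W s (u - v) := fun i =>
  (W s).sub_mem (hu i) (hv i)

theorem HasOrder.smul {u : SymTensor n V m} (hu : HasOrder W s u) (c : ℝ) :
    HasOrder W s (c • u) := fun i =>
  (W s).smul_mem c (hu i)

variable (hD : ∀ s j, ∀ v ∈ W s, D j v ∈ W (s + 1))
include hD

theorem HasOrder.d {u : SymTensor n V m} (hu : HasOrder W s u) :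
    HasOrder W (s + 1) (d D u) := fun i => by
  rw [d_apply]
  exact Submodule.smul_mem _ _ (Submodule.sum_mem _ fun r _ => hD s _ _ (hu _))

theorem HasOrder.div {u : SymTensor n V (m + 1)} (hu : HasOrder W s u) :
    HasOrder W (s + 1) (div D u) := fun i => by
  rw [div_apply]
  exact Submodule.sum_mem _ fun j _ => hD s _ _ (hu _)

theorem HasOrder.dPow {u : SymTensor n V m} (hu : HasOrder W s u) (k : ℕ) :
    HasOrder W (s + k) (dPow D k u) := by
  induction k with
  | zero => simpa [dPow_zero] using hu
  | succ k ih => simpa [add_assoc, dPow_succ] using HasOrder.d hD ih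

theorem HasOrder.divPow {k : ℕ} {u : SymTensor n V (m + k)} (hu : HasOrder W s u) :
    HasOrder W (s + k) (divPow D k u) := by
  induction k generalizing s with
  | zero => simpa [divPow_zero] using hu
  | succ k ih => simpa [add_assoc, add_comm (k : ℤ), divPow_succ] using ih (HasOrder.div hD hu)

theorem HasOrder.map_lap_pow {u : SymTensor n V m} (hu : HasOrder W s u) (N : ℕ) :
    HasOrder W (s + 2 * N) (map (lap D ^ N) u) := by
  have lap_mem {s : ℤ} {v : V} (hv : v ∈ W s) : lap D v ∈ W (s + 1 + 1) := by
    simp only [lap, pow_two, LinearMap.sum_apply]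
    exact Submodule.sum_mem _ fun j _ => hD _ _ _ (hD _ _ _ hv)
  intro i
  induction N with
  | zero => simpa using hu i
  | succ N ih =>
    have hs : s + 2 * N + 1 + 1 = s + 2 * (N + 1 : ℕ) := by push_cast; ring
    rw [pow_succ', map_mul_apply, map_apply, ← hs]
    exact lap_mem ih

theorem HasOrder.adj {u : SymTensor n V m} (hu : HasOrder W s u) (c : ℝ) :
    HasOrder W (s + 2 * m) (adj D m c u) := by
  induction m generalizing s c with
  | zero => simpa [SymTensor.adj] using hu.smul c⁻¹
  | succ m ih =>
    have h := HasOrder.d hD (ih (HasOrder.div hD hu) (c + 1))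
    have hs : s + 1 + 2 * m + 1 = s + 2 * (m + 1 : ℕ) := by push_cast; ring
    rw [hs] at h
    exact ((HasOrder.map_lap_pow hD hu (m + 1)).sub (h.smul _)).smul _

theorem HasOrder.divDAdj {u : SymTensor n V m} (hu : HasOrder W s u) (k : ℕ) :
    HasOrder W (s + 2 * m * k) (divDAdj D m k u) := by
  induction k with
  | zero => simpa [SymTensor.divDAdj] using hu
  | succ k ih =>
    have h := (HasOrder.adj hD ih (k + 1)).smul (m + k + 1)
    have hs : s + 2 * m * k + 2 * m = s + 2 * m * (k + 1 : ℕ) := by push_cast; ring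
    rwa [hs] at h

end Order

end SymTensor

end Tensors

section Liouville

open Topology Laplacian
open scoped Convolution ContDiff

variable {E : Type*} [NormedAddCommGroup E]

section SecondDerivative

variable [NormedSpace ℝ E] {u : E → ℝ} {x : E}

theorem fderiv_fderiv_apply (hu : ContDiff ℝ 2 u) (x v w : E) :
    fderiv ℝ (fun y => fderiv ℝ u y v) x w = fderiv ℝ (fderiv ℝ u) x w v := by
  have hdiff : DifferentiableAt ℝ (fderiv ℝ u) x :=
    (hu.fderiv_right (m := 1) (by norm_num)).differentiable one_ne_zero x
  rw [fderiv_clm_apply hdiff (differentiableAt_const v)]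
  simp

theorem contDiff_fderiv_apply (hu : ContDiff ℝ ∞ u) (v : E) :
    ContDiff ℝ ∞ fun x => fderiv ℝ u x v :=
  (hu.fderiv_right le_rfl).clm_apply contDiff_const

theorem fderiv_fderiv_self_nonpos_of_isLocalMax (hu : ContDiff ℝ 2 u) (hx : IsLocalMax u x)
    (v : E) : fderiv ℝ (fderiv ℝ u) x v v ≤ 0 := by
  have hasDerivAt_line {g : E → ℝ} (hg : Differentiable ℝ g) (t : ℝ) :
      HasDerivAt (fun t : ℝ => g (x + t • v)) (fderiv ℝ g (x + t • v) v) t :=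
    (hg _).hasFDerivAt.comp_hasDerivAt t
      (by simpa using ((hasDerivAt_id t).smul_const v).const_add x)
  have hderiv : deriv (fun t : ℝ => u (x + t • v)) = fun t => fderiv ℝ u (x + t • v) v :=
    funext fun t => (hasDerivAt_line (hu.differentiable two_ne_zero) t).deriv
  have hderiv2 : deriv (deriv fun t : ℝ => u (x + t • v)) 0 = fderiv ℝ (fderiv ℝ u) x v v := by
    have hdiff : Differentiable ℝ fun y => fderiv ℝ u y v :=
      ((hu.fderiv_right (m := 1) (by norm_num)).clm_apply contDiff_const).differentiable one_ne_zero
    rw [hderiv, (hasDerivAt_line hdiff 0).deriv, fderiv_fderiv_apply hu]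
    simp
  have hcont : Continuous fun t : ℝ => x + t • v := by fun_prop
  have hmax : IsLocalMax (fun t : ℝ => u (x + t • v)) 0 :=
    IsLocalMax.comp_continuous (g := fun t : ℝ => x + t • v) (by simpa using hx) hcont.continuousAt
  by_contra! hpos
  -- A point with positive second derivative is a strict minimum, so `u` would be constant nearby.
  have hmin : IsLocalMin (fun t : ℝ => u (x + t • v)) 0 :=
    isLocalMin_of_deriv_deriv_pos (hderiv2 ▸ hpos) hmax.deriv_eq_zero
      (hu.continuous.comp hcont).continuousAt
  have hconst : (fun t : ℝ => u (x + t • v)) =ᶠ[𝓝 0] fun _ => u (x + (0 : ℝ) • v) := by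
    filter_upwards [hmax, hmin] with t h₁ h₂ using le_antisymm h₁ h₂
  have hzero := hconst.deriv.deriv_eq
  simp only [deriv_const', hderiv2] at hzero
  exact hpos.ne' hzero

end SecondDerivative

variable [InnerProductSpace ℝ E] [FiniteDimensional ℝ E] {u : E → ℝ}

theorem laplacian_eq_sum_fderiv_fderiv {ι : Type*} [Fintype ι] (b : OrthonormalBasis ι ℝ E)
    (u : E → ℝ) : Δ u = fun x => ∑ i, fderiv ℝ (fderiv ℝ u) x (b i) (b i) := by
  simp [InnerProductSpace.laplacian_eq_iteratedFDeriv_orthonormalBasis u b,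
    iteratedFDeriv_two_apply]

theorem laplacian_eq_sum_fderiv_apply {ι : Type*} [Fintype ι] (b : OrthonormalBasis ι ℝ E)
    (hu : ContDiff ℝ 2 u) :
    Δ u = fun x => ∑ i, fderiv ℝ (fun y => fderiv ℝ u y (b i)) x (b i) := by
  simp only [laplacian_eq_sum_fderiv_fderiv b, fderiv_fderiv_apply hu]

theorem contDiff_laplacian (hu : ContDiff ℝ ∞ u) : ContDiff ℝ ∞ (Δ u) := by
  rw [laplacian_eq_sum_fderiv_apply (stdOrthonormalBasis ℝ E) (contDiff_infty.mp hu 2)]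
  exact ContDiff.sum fun i _ => contDiff_fderiv_apply (contDiff_fderiv_apply hu _) _

theorem hasCompactSupport_laplacian (hu : HasCompactSupport u) : HasCompactSupport (Δ u) :=
  hu.mono' fun x => by
    contrapose!
    intro hx
    have hzero : u =ᶠ[𝓝 x] 0 := notMem_tsupport_iff_eventuallyEq.mp hx
    rw [Function.notMem_support, (InnerProductSpace.laplacian_congr_nhds hzero).eq_of_nhds]
    simp [laplacian_eq_sum_fderiv_fderiv (stdOrthonormalBasis ℝ E), Pi.zero_def]

theorem contDiff_laplacian_iterate (hu : ContDiff ℝ ∞ u) (N : ℕ) : ContDiff ℝ ∞ (Δ^[N] u) := by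
  induction N with
  | zero => exact hu
  | succ N ih =>
    rw [Function.iterate_succ_apply']
    exact contDiff_laplacian ih

theorem hasCompactSupport_laplacian_iterate (hu : HasCompactSupport u) (N : ℕ) :
    HasCompactSupport (Δ^[N] u) := by
  induction N with
  | zero => exact hu
  | succ N ih =>
    rw [Function.iterate_succ_apply']
    exact hasCompactSupport_laplacian ih

theorem laplacian_norm_sq (x : E) : Δ (fun y : E => ‖y‖ ^ 2) x = 2 * Module.finrank ℝ E := by
  have hfderiv : fderiv ℝ (fun y : E => ‖y‖ ^ 2) = ⇑((2 : ℝ) • innerSL ℝ (E := E)) := by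
    ext y v
    simp [two_smul]
  have hfderiv2 : fderiv ℝ (fderiv ℝ fun y : E => ‖y‖ ^ 2) x = (2 : ℝ) • innerSL ℝ (E := E) := by
    rw [hfderiv, ContinuousLinearMap.fderiv]
  have hinner (i) : fderiv ℝ (fderiv ℝ fun y : E => ‖y‖ ^ 2) x (stdOrthonormalBasis ℝ E i)
      (stdOrthonormalBasis ℝ E i) = 2 := by
    rw [hfderiv2]
    change 2 * inner ℝ (stdOrthonormalBasis ℝ E i) (stdOrthonormalBasis ℝ E i) = 2
    simp
  simp [laplacian_eq_sum_fderiv_fderiv (stdOrthonormalBasis ℝ E), hinner, mul_comm]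

theorem laplacian_nonpos_of_isLocalMax {x : E} (hu : ContDiff ℝ 2 u) (hx : IsLocalMax u x) :
    Δ u x ≤ 0 := by
  rw [laplacian_eq_sum_fderiv_fderiv (stdOrthonormalBasis ℝ E)]
  exact Finset.sum_nonpos fun i _ => fderiv_fderiv_self_nonpos_of_isLocalMax hu hx _

theorem laplacian_add_const_smul_norm_sq (hu : ContDiff ℝ 2 u) (η : ℝ) (x : E) :
    Δ (u + η • fun y : E => ‖y‖ ^ 2) x = Δ u x + η * (2 * Module.finrank ℝ E) := by
  have hsq : ContDiff ℝ 2 fun y : E => ‖y‖ ^ 2 := contDiff_norm_sq ℝ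
  have hηsq : ContDiff ℝ 2 (η • fun y : E => ‖y‖ ^ 2) := hsq.const_smul η
  rw [hu.contDiffAt.laplacian_add hηsq.contDiffAt,
    InnerProductSpace.laplacian_smul η hsq.contDiffAt, laplacian_norm_sq, smul_eq_mul]

variable [Nontrivial E]

theorem nonpos_of_laplacian_eq_zero (hu : ContDiff ℝ 2 u) (hΔ : Δ u = 0)
    (hlim : Tendsto u (cocompact E) (𝓝 0)) (x₀ : E) : u x₀ ≤ 0 := by
  by_contra! hpos
  obtain ⟨R, hRpos, hx₀, hR⟩ :
      ∃ R > 0, ‖x₀‖ ≤ R ∧ ∀ x, R ≤ ‖x‖ → u x < u x₀ / 2 := by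
    have hev := hlim.eventually_lt_const (half_pos hpos)
    rw [← Metric.cobounded_eq_cocompact, ← comap_norm_atTop, eventually_comap] at hev
    obtain ⟨R, hR⟩ := eventually_atTop.mp hev
    exact ⟨max R (‖x₀‖ + 1), lt_max_of_lt_right (by positivity),
      le_max_of_le_right (by linarith), fun x hx => hR _ ((le_max_left _ _).trans hx) x rfl⟩
  -- `h` is strictly subharmonic and `η` is so small that its maximum on the ball is still interior.
  set η := u x₀ / (4 * R ^ 2)
  have hηpos : 0 < η := by positivity
  set h : E → ℝ := u + η • fun y => ‖y‖ ^ 2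
  have hh : ContDiff ℝ 2 h := hu.add ((contDiff_norm_sq ℝ).const_smul η)
  obtain ⟨z, hz, hzmax⟩ := (isCompact_closedBall (0 : E) R).exists_isMaxOn
    ⟨0, by simp [hRpos.le]⟩ hh.continuous.continuousOn
  have hz_ge : u x₀ ≤ h z := by
    have hle : h x₀ ≤ h z := hzmax (by simpa using hx₀)
    exact (le_add_of_nonneg_right (show 0 ≤ η * ‖x₀‖ ^ 2 by positivity)).trans hle
  have hz_interior : ‖z‖ < R := by
    by_contra! hge
    have hηz : η * ‖z‖ ^ 2 ≤ u x₀ / 4 :=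
      calc η * ‖z‖ ^ 2 ≤ η * R ^ 2 := by gcongr; simpa using hz
        _ = u x₀ / 4 := by simp only [η]; field_simp
    have hhz : h z = u z + η * ‖z‖ ^ 2 := rfl
    linarith [hR z hge]
  have hloc : IsLocalMax h z :=
    hzmax.isLocalMax (mem_of_superset (Metric.isOpen_ball.mem_nhds (by simpa using hz_interior))
      Metric.ball_subset_closedBall)
  have hΔh := laplacian_nonpos_of_isLocalMax hh hloc
  rw [laplacian_add_const_smul_norm_sq hu, hΔ, Pi.zero_apply, zero_add] at hΔh
  have hdim : (0 : ℝ) < Module.finrank ℝ E := by exact_mod_cast Module.finrank_pos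
  exact hΔh.not_gt (by positivity)

theorem eq_zero_of_laplacian_eq_zero (hu : ContDiff ℝ 2 u) (hΔ : Δ u = 0)
    (hlim : Tendsto u (cocompact E) (𝓝 0)) : u = 0 := by
  have hΔneg : Δ (-u) = 0 := by
    ext x
    simp [InnerProductSpace.laplacian_neg, hΔ]
  have hlimneg : Tendsto (-u) (cocompact E) (𝓝 0) := by
    simpa [Pi.neg_def] using hlim.neg
  funext x
  exact le_antisymm (nonpos_of_laplacian_eq_zero hu hΔ hlim x)
    (by simpa using nonpos_of_laplacian_eq_zero hu.neg hΔneg hlimneg x)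

section Convolution

variable {E : Type*} [NormedAddCommGroup E] [InnerProductSpace ℝ E] [FiniteDimensional ℝ E]
  [MeasurableSpace E] [BorelSpace E] {u ρ : E → ℝ}

theorem fderiv_convolution_apply (hu : Continuous u) (hρ : ContDiff ℝ 1 ρ)
    (hc : HasCompactSupport ρ) (v : E) :
    (fun x => fderiv ℝ (u ⋆ ρ) x v) = u ⋆ fun y => fderiv ℝ ρ y v := by
  funext x
  rw [(hc.hasFDerivAt_convolution_right _ hu.locallyIntegrable hρ x).fderiv]
  exact convolution_precompR_apply (ContinuousLinearMap.lsmul ℝ ℝ) hu.locallyIntegrable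
    (hc.fderiv (𝕜 := ℝ)) (hρ.continuous_fderiv one_ne_zero) x v

theorem convolution_fderiv_apply (hu : ContDiff ℝ 1 u) (hρ : ContDiff ℝ 1 ρ)
    (hc : HasCompactSupport ρ) (v : E) :
    ((fun y => fderiv ℝ u y v) ⋆ ρ) = u ⋆ fun y => fderiv ℝ ρ y v := by
  funext x
  have hρx : ContDiff ℝ 1 fun t => ρ (x - t) := by fun_prop
  have hcx : HasCompactSupport fun t => ρ (x - t) := hc.comp_homeomorph (Homeomorph.subLeft x)
  have hdρ (t : E) : fderiv ℝ (fun t => ρ (x - t)) t v = -fderiv ℝ ρ (x - t) v := by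
    have hsub : HasFDerivAt (fun t : E => x - t) (-ContinuousLinearMap.id ℝ E) t :=
      (hasFDerivAt_id t).const_sub x
    have hcomp := (hρ.differentiable one_ne_zero (x - t)).hasFDerivAt.comp t hsub
    simpa [Function.comp_def] using congrArg (· v) hcomp.fderiv
  have hdu : Continuous fun t => fderiv ℝ u t v :=
    (hu.continuous_fderiv one_ne_zero).clm_apply continuous_const
  have hdρx : Continuous fun t => fderiv ℝ (fun t => ρ (x - t)) t v :=
    (hρx.continuous_fderiv one_ne_zero).clm_apply continuous_const
  have parts := integral_mul_fderiv_eq_neg_fderiv_mul_of_integrable (μ := volume) (v := v)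
    ((hdu.mul hρx.continuous).integrable_of_hasCompactSupport hcx.mul_left)
    ((hu.continuous.mul hdρx).integrable_of_hasCompactSupport
      (hcx.fderiv_apply (𝕜 := ℝ) v).mul_left)
    ((hu.continuous.mul hρx.continuous).integrable_of_hasCompactSupport hcx.mul_left)
    (fun t _ => hu.differentiable one_ne_zero t) (fun t _ => hρx.differentiable one_ne_zero t)
  simp only [hdρ, mul_neg, integral_neg, neg_inj] at parts
  exact parts.symm

theorem sum_convolution {ι : Type*} (s : Finset ι) {w : ι → E → ℝ} (hw : ∀ i, Continuous (w i))
    (hρ : Continuous ρ) (hc : HasCompactSupport ρ) :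
    ((fun y => ∑ i ∈ s, w i y) ⋆ ρ) = fun x => ∑ i ∈ s, (w i ⋆ ρ) x := by
  funext x
  simp only [convolution_def, map_sum, sum_apply]
  exact integral_finsetSum _ fun i _ =>
    hc.convolutionExists_right _ (hw i).locallyIntegrable hρ x

theorem convolution_sum {ι : Type*} (s : Finset ι) {ρ : ι → E → ℝ} (hu : Continuous u)
    (hρ : ∀ i, Continuous (ρ i)) (hc : ∀ i, HasCompactSupport (ρ i)) :
    (u ⋆ fun y => ∑ i ∈ s, ρ i y) = fun x => ∑ i ∈ s, (u ⋆ ρ i) x := by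
  funext x
  simp only [convolution_def, map_sum]
  exact integral_finsetSum _ fun i _ =>
    (hc i).convolutionExists_right _ hu.locallyIntegrable (hρ i) x

theorem laplacian_convolution (hu : Continuous u) (hρ : ContDiff ℝ ∞ ρ)
    (hc : HasCompactSupport ρ) : Δ (u ⋆ ρ) = u ⋆ Δ ρ := by
  have hsmooth : ContDiff ℝ ∞ (u ⋆ ρ) :=
    hc.contDiff_convolution_right _ hu.locallyIntegrable hρ
  rw [laplacian_eq_sum_fderiv_apply (stdOrthonormalBasis ℝ E) (contDiff_infty.mp hsmooth 2),
    laplacian_eq_sum_fderiv_apply (stdOrthonormalBasis ℝ E) (contDiff_infty.mp hρ 2),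
    convolution_sum _ hu
      (fun i => (contDiff_fderiv_apply (contDiff_fderiv_apply hρ _) _).continuous)
      (fun i => (hc.fderiv_apply (𝕜 := ℝ) _).fderiv_apply (𝕜 := ℝ) _)]
  funext x
  refine Finset.sum_congr rfl fun i _ => ?_
  rw [fderiv_convolution_apply hu (hρ.of_le (by simp)) hc,
    ← fderiv_convolution_apply hu ((contDiff_fderiv_apply hρ _).of_le (by simp))
      (hc.fderiv_apply (𝕜 := ℝ) _)]

theorem convolution_laplacian (hu : ContDiff ℝ ∞ u) (hρ : ContDiff ℝ ∞ ρ)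
    (hc : HasCompactSupport ρ) : (Δ u ⋆ ρ) = u ⋆ Δ ρ := by
  rw [laplacian_eq_sum_fderiv_apply (stdOrthonormalBasis ℝ E) (contDiff_infty.mp hu 2),
    laplacian_eq_sum_fderiv_apply (stdOrthonormalBasis ℝ E) (contDiff_infty.mp hρ 2),
    convolution_sum _ hu.continuous
      (fun i => (contDiff_fderiv_apply (contDiff_fderiv_apply hρ _) _).continuous)
      (fun i => (hc.fderiv_apply (𝕜 := ℝ) _).fderiv_apply (𝕜 := ℝ) _),
    sum_convolution _ (fun i => (contDiff_fderiv_apply (contDiff_fderiv_apply hu _) _).continuous)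
      hρ.continuous hc]
  funext x
  refine Finset.sum_congr rfl fun i _ => ?_
  rw [convolution_fderiv_apply ((contDiff_fderiv_apply hu _).of_le (by simp))
      (hρ.of_le (by simp)) hc,
    convolution_fderiv_apply (hu.of_le (by simp)) ((contDiff_fderiv_apply hρ _).of_le (by simp))
      (hc.fderiv_apply (𝕜 := ℝ) _)]

theorem tendsto_convolution_cocompact (hu : Continuous u) (hlim : Tendsto u (cocompact E) (𝓝 0))
    (hρ : Continuous ρ) (hc : HasCompactSupport ρ) :
    Tendsto (u ⋆ ρ) (cocompact E) (𝓝 0) := by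
  obtain ⟨C, hC⟩ := isBounded_iff_forall_norm_le.mp
    (ZeroAtInftyContinuousMap.isBounded_range ⟨⟨u, hu⟩, hlim⟩)
  have hC (x : E) : ‖u x‖ ≤ C := hC _ ⟨x, rfl⟩
  have : (cocompact E).IsCountablyGenerated := by
    rw [← Metric.cobounded_eq_cocompact, ← comap_norm_atTop]
    infer_instance
  have key : Tendsto (fun x => ∫ t, u (x - t) * ρ t) (cocompact E) (𝓝 (∫ _ : E, (0 : ℝ))) := by
    refine tendsto_integral_filter_of_dominated_convergence (fun t => C * ‖ρ t‖)
      (Eventually.of_forall fun x => ((hu.comp (by fun_prop)).mul hρ).aestronglyMeasurable)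
      (Eventually.of_forall fun x => Eventually.of_forall fun t => ?_)
      ((hρ.integrable_of_hasCompactSupport hc).norm.const_mul C)
      (Eventually.of_forall fun t => ?_)
    · rw [norm_mul]
      exact mul_le_mul_of_nonneg_right (hC _) (norm_nonneg _)
    · have hsub : Tendsto (fun x : E => x - t) (cocompact E) (cocompact E) :=
        (Homeomorph.subRight t).isClosedEmbedding.tendsto_cocompact
      simpa using (hlim.comp hsub).mul_const (ρ t)
  have hconv : (u ⋆ ρ) = fun x => ∫ t, u (x - t) * ρ t := funext fun x => convolution_eq_swap ..
  simpa [hconv] using key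

theorem eq_zero_of_forall_convolution_eq_zero (hu : Continuous u)
    (h : ∀ ρ : E → ℝ, ContDiff ℝ ∞ ρ → HasCompactSupport ρ → (u ⋆ ρ) = 0) : u = 0 := by
  refine (Continuous.ae_eq_iff_eq volume hu continuous_const).mp
    (ae_eq_zero_of_integral_contDiff_smul_eq_zero hu.locallyIntegrable fun ρ hρ hc => ?_)
  have h0 := congrFun (h (fun x => ρ (-x)) (hρ.comp contDiff_neg)
    (hc.comp_homeomorph (Homeomorph.neg E))) 0
  simpa [convolution_def, mul_comm] using h0

theorem convolution_laplacian_iterate (hu : ContDiff ℝ ∞ u) (hρ : ContDiff ℝ ∞ ρ)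
    (hc : HasCompactSupport ρ) (N : ℕ) : (Δ^[N] u ⋆ ρ) = u ⋆ Δ^[N] ρ := by
  induction N generalizing ρ with
  | zero => rfl
  | succ N ih =>
    rw [Function.iterate_succ_apply', Function.iterate_succ_apply,
      convolution_laplacian (contDiff_laplacian_iterate hu N) hρ hc,
      ih (contDiff_laplacian hρ) (hasCompactSupport_laplacian hc)]

theorem convolution_eq_zero_of_convolution_laplacian_eq_zero [Nontrivial E] (hu : Continuous u)
    (hlim : Tendsto u (cocompact E) (𝓝 0)) (hρ : ContDiff ℝ ∞ ρ) (hc : HasCompactSupport ρ)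
    (h : (u ⋆ Δ ρ) = 0) : (u ⋆ ρ) = 0 :=
  eq_zero_of_laplacian_eq_zero
    (hc.contDiff_convolution_right _ hu.locallyIntegrable (contDiff_infty.mp hρ 2))
    ((laplacian_convolution hu hρ hc).trans h)
    (tendsto_convolution_cocompact hu hlim hρ.continuous hc)

theorem eq_zero_of_laplacian_iterate_eq_zero [Nontrivial E] (hu : ContDiff ℝ ∞ u)
    (hlim : Tendsto u (cocompact E) (𝓝 0)) {N : ℕ} (hΔ : Δ^[N] u = 0) : u = 0 := by
  refine eq_zero_of_forall_convolution_eq_zero hu.continuous fun ρ hρ hc => ?_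
  have hN : (u ⋆ Δ^[N] ρ) = 0 := by
    rw [← convolution_laplacian_iterate hu hρ hc, hΔ, zero_convolution]
  clear hΔ
  induction N with
  | zero => exact hN
  | succ N ih =>
    rw [Function.iterate_succ_apply'] at hN
    exact ih (convolution_eq_zero_of_convolution_laplacian_eq_zero hu.continuous hlim
      (contDiff_laplacian_iterate hρ N) (hasCompactSupport_laplacian_iterate hc N) hN)

end Convolution

end Liouville

section SmoothFunctions

open Topology Laplacian
open scoped ContDiff

/-- The space `C^∞(ℝⁿ)` of smooth real functions, the coefficients of smooth tensor fields. -/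
def SmoothFun (n : ℕ) : Submodule ℝ (En n → ℝ) where
  carrier := {u | ContDiff ℝ ∞ u}
  add_mem' {u v} (hu : ContDiff ℝ ∞ u) (hv : ContDiff ℝ ∞ v) := hu.add hv
  zero_mem' := show ContDiff ℝ ∞ (0 : En n → ℝ) from contDiff_const
  smul_mem' c u (hu : ContDiff ℝ ∞ u) := hu.const_smul c

namespace SmoothFun

variable {n m : ℕ}

-- Without this shortcut, `u - v` for tensors with coefficients in `SmoothFun n` is elaborated along
-- an instance path that `rw [map_sub]` fails to unify.
instance : AddCommGroup (SmoothFun n) :=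
  Submodule.addCommGroup _

theorem contDiff (u : SmoothFun n) : ContDiff ℝ ∞ (u : En n → ℝ) :=
  u.2

theorem differentiable (u : SmoothFun n) : Differentiable ℝ (u : En n → ℝ) :=
  (contDiff u).differentiable (by simp)

/-- The partial derivative `∂/∂x^j` as an endomorphism of `C^∞(ℝⁿ)`. -/
def partialDeriv (j : Fin n) : Module.End ℝ (SmoothFun n) where
  toFun u := ⟨pd j u, contDiff_fderiv_apply (contDiff u) _⟩
  map_add' u v := by
    ext x
    simp [pd, fderiv_add (differentiable u x) (differentiable v x)]
  map_smul' c u := by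
    ext x
    simp [pd, fderiv_const_smul (differentiable u x)]

@[simp]
theorem coe_partialDeriv (j : Fin n) (u : SmoothFun n) : (partialDeriv j u : En n → ℝ) = pd j u :=
  rfl

theorem commute_partialDeriv (i j : Fin n) :
    Commute (partialDeriv (n := n) i) (partialDeriv j) := by
  refine LinearMap.ext fun u => Subtype.ext (funext fun x => ?_)
  have hu : ContDiff ℝ 2 u.1 := contDiff_infty.mp (contDiff u) 2
  have hsymm := hu.contDiffAt.isSymmSndFDerivAt (x := x) (by simp)
  change fderiv ℝ (fun y => fderiv ℝ u.1 y _) x _ = fderiv ℝ (fun y => fderiv ℝ u.1 y _) x _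
  rw [fderiv_fderiv_apply hu, fderiv_fderiv_apply hu]
  exact hsymm _ _

theorem coe_lap (u : SmoothFun n) :
    (SymTensor.lap partialDeriv u : En n → ℝ) = Δ (u : En n → ℝ) := by
  rw [laplacian_eq_sum_fderiv_apply (EuclideanSpace.basisFun (Fin n) ℝ)
    (contDiff_infty.mp (contDiff u) 2)]
  ext x
  simp only [SymTensor.lap, pow_two, LinearMap.sum_apply, AddSubmonoidClass.coe_finsetSum,
    Finset.sum_apply, EuclideanSpace.basisFun_apply]
  rfl

theorem coe_lap_pow (N : ℕ) (u : SmoothFun n) :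
    ((SymTensor.lap partialDeriv ^ N) u : En n → ℝ) = Δ^[N] (u : En n → ℝ) := by
  induction N with
  | zero => rfl
  | succ N ih => rw [pow_succ', Module.End.mul_apply, coe_lap, ih, Function.iterate_succ_apply']

theorem eq_zero_of_lap_pow_eq_zero [NeZero n] {u : SmoothFun n}
    (hlim : Tendsto (u : En n → ℝ) (cocompact (En n)) (𝓝 0)) {N : ℕ}
    (hu : (SymTensor.lap partialDeriv ^ N) u = 0) : u = 0 :=
  Subtype.ext <| eq_zero_of_laplacian_iterate_eq_zero (contDiff u) hlim <| by
    rw [← coe_lap_pow, hu]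
    rfl

/-- The tensor field on `ℝⁿ` underlying a symmetric tensor with smooth coefficients. -/
def toField (u : SymTensor n (SmoothFun n) m) : (Fin m → Fin n) → En n → ℝ :=
  fun i => u.1 i

theorem toField_ext {u v : SymTensor n (SmoothFun n) m}
    (h : ∀ i x, toField u i x = toField v i x) : u = v :=
  SymTensor.ext fun i => Subtype.ext (funext (h i))

theorem exists_toField_eq {f : (Fin m → Fin n) → En n → ℝ} (hf : ∀ i, ContDiff ℝ ∞ (f i))
    (hsym : IsSymField f) : ∃ u : SymTensor n (SmoothFun n) m, toField u = f :=
  ⟨⟨fun i => ⟨f i, hf i⟩, fun π i => Subtype.ext (hsym π i)⟩, rfl⟩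

theorem isSymField_toField (u : SymTensor n (SmoothFun n) m) : IsSymField (toField u) :=
  fun π i => congrArg Subtype.val (u.2 π i)

theorem toField_d (u : SymTensor n (SmoothFun n) m) :
    toField (SymTensor.d partialDeriv u) = dsym (toField u) := by
  funext i
  simp [toField, SymTensor.d, dsym, symz]

theorem toField_div (u : SymTensor n (SmoothFun n) (m + 1)) :
    toField (SymTensor.div partialDeriv u) = divg (toField u) := by
  funext i x
  simp [toField, SymTensor.div, divg, Finset.sum_apply]

theorem toField_dPow (k : ℕ) (u : SymTensor n (SmoothFun n) m) :
    toField (SymTensor.dPow partialDeriv k u) = dpow k (toField u) := by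
  induction k with
  | zero => rfl
  | succ k ih => rw [SymTensor.dPow_succ, toField_d, ih, dpow]

theorem toField_divPow (k : ℕ) (u : SymTensor n (SmoothFun n) (m + k)) :
    toField (SymTensor.divPow partialDeriv k u) = divpow k (toField u) := by
  induction k with
  | zero => rfl
  | succ k ih => rw [SymTensor.divPow_succ, ih, toField_div, divpow]

theorem eq_add_dPow_iff {k : ℕ} {f g : SymTensor n (SmoothFun n) (m + k)}
    {v : SymTensor n (SmoothFun n) m} : f = g + SymTensor.dPow partialDeriv k v ↔
      ∀ i x, toField f i x = toField g i x + dpow k (toField v) i x := by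
  rw [← toField_dPow]
  exact ⟨fun h _ _ => by rw [h]; rfl, fun h => toField_ext h⟩

theorem divPow_eq_zero_iff {k : ℕ} {g : SymTensor n (SmoothFun n) (m + k)} :
    SymTensor.divPow partialDeriv k g = 0 ↔ ∀ i x, divpow k (toField g) i x = 0 := by
  rw [← toField_divPow]
  exact ⟨fun h _ _ => by rw [h]; rfl, fun h => toField_ext h⟩

theorem eq_zero_of_divPow_dPow_eq_zero [NeZero n] {k : ℕ} {u : SymTensor n (SmoothFun n) m}
    (hlim : ∀ i, Tendsto (toField u i) (cocompact (En n)) (𝓝 0))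
    (hu : SymTensor.divPow partialDeriv k (SymTensor.dPow partialDeriv k u) = 0) : u = 0 := by
  have hlap := SymTensor.divDAdj_divPow_dPow commute_partialDeriv k u
  rw [hu, map_zero] at hlap
  exact SymTensor.ext fun i =>
    eq_zero_of_lap_pow_eq_zero (hlim i) (congrArg (fun w => w.1 i) hlap.symm)

theorem decomposition_unique [NeZero n] {k : ℕ} {g g' : SymTensor n (SmoothFun n) (m + k)}
    {v v' : SymTensor n (SmoothFun n) m}
    (hsum : g + SymTensor.dPow partialDeriv k v = g' + SymTensor.dPow partialDeriv k v')
    (hg : SymTensor.divPow partialDeriv k g = 0) (hg' : SymTensor.divPow partialDeriv k g' = 0)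
    (hv : ∀ i, Tendsto (toField v i) (cocompact (En n)) (𝓝 0))
    (hv' : ∀ i, Tendsto (toField v' i) (cocompact (En n)) (𝓝 0)) : g' = g ∧ v' = v := by
  have hdiff : SymTensor.dPow partialDeriv k (v' - v) = g - g' := by
    rw [map_sub, sub_eq_sub_iff_add_eq_add, add_comm _ g', ← hsum, add_comm g]
  have hzero : v' - v = 0 := by
    refine eq_zero_of_divPow_dPow_eq_zero (k := k) (fun i => ?_) ?_
    · exact sub_zero (0 : ℝ) ▸ (hv' i).sub (hv i)
    · rw [hdiff, map_sub, hg, hg', sub_zero]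
  obtain rfl : v' = v := sub_eq_zero.mp hzero
  exact ⟨(add_right_cancel hsum).symm, rfl⟩

end SmoothFun

end SmoothFunctions

section Symbols

open Topology Module
open scoped ContDiff FourierTransform SchwartzMap

variable {E F : Type*} [NormedAddCommGroup E] [NormedSpace ℝ E] [NormedAddCommGroup F]
  [NormedSpace ℝ F]

theorem norm_iteratedFDeriv_smul_le_of_contDiffOn {𝕜 : Type*} [NormedField 𝕜] [NormedAlgebra ℝ 𝕜]
    [NormedSpace 𝕜 F] [IsScalarTower ℝ 𝕜 F] {U : Set E} (hU : IsOpen U) {a : E → 𝕜} {h : E → F}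
    (ha : ContDiffOn ℝ ∞ a U) (hh : ContDiffOn ℝ ∞ h U) {ξ : E} (hξ : ξ ∈ U) (r : ℕ) :
    ‖iteratedFDeriv ℝ r (fun ξ => a ξ • h ξ) ξ‖ ≤ ∑ i ∈ Finset.range (r + 1),
      r.choose i * ‖iteratedFDeriv ℝ i a ξ‖ * ‖iteratedFDeriv ℝ (r - i) h ξ‖ := by
  have hle := norm_iteratedFDerivWithin_smul_le ha hh hU.uniqueDiffOn hξ (n := r) (mod_cast le_top)
  simpa only [iteratedFDerivWithin_of_isOpen _ hU hξ] using hle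

theorem iteratedFDeriv_comp_smul (a : E → F) {t : ℝ} (ht : t ≠ 0) (r : ℕ) (ξ : E) :
    iteratedFDeriv ℝ r (fun ξ => a (t • ξ)) ξ = t ^ r • iteratedFDeriv ℝ r a (t • ξ) := by
  have hcomp := (ContinuousLinearEquiv.smulLeft (Units.mk0 t ht) :
    E ≃L[ℝ] E).iteratedFDerivWithin_comp_right a uniqueDiffOn_univ (Set.mem_univ _) r (x := ξ)
  simp only [Set.preimage_univ, iteratedFDerivWithin_univ] at hcomp
  refine hcomp.trans ?_
  ext v
  exact (iteratedFDeriv ℝ r a (t • ξ)).map_smul_univ (fun _ => t) v |>.trans (by simp)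

section Homogeneous

variable {d : ℤ} {a : E → F}

theorem norm_pow_mul_norm_iteratedFDeriv_smul_of_homogeneous (ha : ContDiffOn ℝ ∞ a {0}ᶜ)
    (hom : ∀ t : ℝ, 0 < t → ∀ ξ, a (t • ξ) = t ^ d • a ξ) (r : ℕ) {t : ℝ} (ht : 0 < t) {ξ : E}
    (hξ : ξ ≠ 0) :
    t ^ r * ‖iteratedFDeriv ℝ r a (t • ξ)‖ = t ^ d * ‖iteratedFDeriv ℝ r a ξ‖ := by
  have hξa : ContDiffAt ℝ r a ξ :=
    (contDiffOn_infty.mp ha r).contDiffAt (isOpen_compl_singleton.mem_nhds hξ)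
  have hnorm := congrArg norm (iteratedFDeriv_comp_smul a ht.ne' r ξ)
  simp only [hom t ht] at hnorm
  rw [iteratedFDeriv_const_smul_apply' hξa, norm_smul, norm_smul] at hnorm
  simpa [abs_of_pos ht] using hnorm.symm

theorem exists_norm_iteratedFDeriv_le_of_homogeneous [FiniteDimensional ℝ E]
    (ha : ContDiffOn ℝ ∞ a {0}ᶜ)
    (hom : ∀ t : ℝ, 0 < t → ∀ ξ, a (t • ξ) = t ^ d • a ξ) (r : ℕ) :
    ∃ C, ∀ ξ ≠ 0, ‖iteratedFDeriv ℝ r a ξ‖ ≤ C * ‖ξ‖ ^ (d - r) := by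
  have hsphere : Metric.sphere (0 : E) 1 ⊆ {0}ᶜ := fun ξ hξ => by
    rintro rfl
    simp at hξ
  have hcont : ContinuousOn (iteratedFDeriv ℝ r a) (Metric.sphere 0 1) := fun ξ hξ =>
    have hξa : ContDiffAt ℝ r a ξ :=
      (contDiffOn_infty.mp ha r).contDiffAt (isOpen_compl_singleton.mem_nhds (hsphere hξ))
    (hξa.continuousAt_iteratedFDeriv le_rfl).continuousWithinAt
  obtain ⟨C, hC⟩ := (isCompact_sphere (0 : E) 1).exists_bound_of_continuousOn hcont
  refine ⟨C, fun ξ hξ => ?_⟩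
  have hpos : 0 < ‖ξ‖ := norm_pos_iff.mpr hξ
  have hscale := norm_pow_mul_norm_iteratedFDeriv_smul_of_homogeneous ha hom r (inv_pos.mpr hpos) hξ
  calc ‖iteratedFDeriv ℝ r a ξ‖
      = ‖iteratedFDeriv ℝ r a (‖ξ‖⁻¹ • ξ)‖ * ‖ξ‖ ^ (d - r) := by
        rw [zpow_sub₀ hpos.ne', zpow_natCast]
        rw [inv_pow, inv_zpow] at hscale
        field_simp at hscale ⊢
        linarith
    _ ≤ C * ‖ξ‖ ^ (d - r) := by
        gcongr
        exact hC _ (by simp [norm_smul, hpos.ne'])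

end Homogeneous

/-- Symbols of order `s`: functions smooth away from the origin whose `r`-th derivative is
`O(‖ξ‖^(s-r))` at the origin and decays rapidly at infinity. -/
structure IsSymbol (s : ℤ) (h : E → F) : Prop where
  contDiffOn : ContDiffOn ℝ ∞ h {0}ᶜ
  bound : ∀ r M : ℕ, ∃ C, ∀ ξ ≠ 0,
    (1 + ‖ξ‖) ^ M * ‖iteratedFDeriv ℝ r h ξ‖ ≤ C * ‖ξ‖ ^ (s - r)

namespace IsSymbol

variable {s : ℤ} {h h' : E → F}

theorem contDiffAt (hh : IsSymbol s h) (r : ℕ) {ξ : E} (hξ : ξ ≠ 0) : ContDiffAt ℝ r h ξ :=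
  (contDiffOn_infty.mp hh.contDiffOn r).contDiffAt (isOpen_compl_singleton.mem_nhds hξ)

theorem zero : IsSymbol s (0 : E → F) :=
  ⟨contDiffOn_const, fun r M => ⟨0, fun ξ _ => by simp [Pi.zero_def]⟩⟩

theorem add (hh : IsSymbol s h) (hh' : IsSymbol s h') : IsSymbol s (h + h') where
  contDiffOn := hh.contDiffOn.add hh'.contDiffOn
  bound r M := by
    obtain ⟨C, hC⟩ := hh.bound r M
    obtain ⟨C', hC'⟩ := hh'.bound r M
    refine ⟨C + C', fun ξ hξ => ?_⟩
    rw [iteratedFDeriv_add_apply (hh.contDiffAt r hξ) (hh'.contDiffAt r hξ), add_mul]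
    calc (1 + ‖ξ‖) ^ M * ‖iteratedFDeriv ℝ r h ξ + iteratedFDeriv ℝ r h' ξ‖
        ≤ (1 + ‖ξ‖) ^ M * (‖iteratedFDeriv ℝ r h ξ‖ + ‖iteratedFDeriv ℝ r h' ξ‖) := by
          gcongr
          exact norm_add_le _ _
      _ ≤ C * ‖ξ‖ ^ (s - r) + C' * ‖ξ‖ ^ (s - r) := by
          rw [mul_add]
          exact add_le_add (hC ξ hξ) (hC' ξ hξ)

theorem const_smul (hh : IsSymbol s h) (c : ℝ) : IsSymbol s (c • h) where
  contDiffOn := hh.contDiffOn.const_smul c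
  bound r M := by
    obtain ⟨C, hC⟩ := hh.bound r M
    refine ⟨‖c‖ * C, fun ξ hξ => ?_⟩
    rw [iteratedFDeriv_const_smul_apply (hh.contDiffAt r hξ), norm_smul, mul_left_comm, mul_assoc]
    exact mul_le_mul_of_nonneg_left (hC ξ hξ) (norm_nonneg c)

theorem of_schwartz (φ : 𝓢(E, F)) : IsSymbol 0 φ where
  contDiffOn := φ.smooth'.contDiffOn
  bound r M := by
    refine ⟨2 ^ (M + r) * (Finset.Iic (M + r, r)).sup
      (fun m => SchwartzMap.seminorm ℝ m.1 m.2) φ, fun ξ hξ => ?_⟩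
    have hpos : 0 < ‖ξ‖ := norm_pos_iff.mpr hξ
    rw [zero_sub, zpow_neg, zpow_natCast, ← div_eq_mul_inv, le_div_iff₀ (by positivity)]
    calc (1 + ‖ξ‖) ^ M * ‖iteratedFDeriv ℝ r φ ξ‖ * ‖ξ‖ ^ r
        ≤ (1 + ‖ξ‖) ^ M * ‖iteratedFDeriv ℝ r φ ξ‖ * (1 + ‖ξ‖) ^ r := by
          gcongr
          linarith
      _ = (1 + ‖ξ‖) ^ (M + r) * ‖iteratedFDeriv ℝ r φ ξ‖ := by ring
      _ ≤ _ :=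
        SchwartzMap.one_add_le_sup_seminorm_apply (m := (M + r, r)) le_rfl le_rfl φ ξ

theorem exists_bound_smul {𝕜 : Type*} [NormedField 𝕜] [NormedAlgebra ℝ 𝕜] [NormedSpace 𝕜 F]
    [IsScalarTower ℝ 𝕜 F] (hh : IsSymbol s h) (d : ℤ) (A : ℕ → ℝ) (r M : ℕ) :
    ∃ C, ∀ a : E → 𝕜, ContDiffOn ℝ ∞ a {0}ᶜ →
      (∀ i, ∀ ξ ≠ 0, ‖iteratedFDeriv ℝ i a ξ‖ ≤ A i * ‖ξ‖ ^ (d - i)) →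
      ∀ ξ ≠ 0, (1 + ‖ξ‖) ^ M * ‖iteratedFDeriv ℝ r (fun ξ => a ξ • h ξ) ξ‖ ≤
        C * ‖ξ‖ ^ (d + s - r) := by
  choose C hC using hh.bound
  refine ⟨∑ i ∈ Finset.range (r + 1), r.choose i * A i * C (r - i) M, fun a ha hA ξ hξ => ?_⟩
  have hpos : 0 < ‖ξ‖ := norm_pos_iff.mpr hξ
  calc (1 + ‖ξ‖) ^ M * ‖iteratedFDeriv ℝ r (fun ξ => a ξ • h ξ) ξ‖
      ≤ (1 + ‖ξ‖) ^ M * ∑ i ∈ Finset.range (r + 1), r.choose i * ‖iteratedFDeriv ℝ i a ξ‖ *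
        ‖iteratedFDeriv ℝ (r - i) h ξ‖ := by
        gcongr
        exact norm_iteratedFDeriv_smul_le_of_contDiffOn isOpen_compl_singleton ha hh.contDiffOn hξ r
    _ = ∑ i ∈ Finset.range (r + 1), r.choose i * ‖iteratedFDeriv ℝ i a ξ‖ *
        ((1 + ‖ξ‖) ^ M * ‖iteratedFDeriv ℝ (r - i) h ξ‖) := by
      rw [Finset.mul_sum]
      exact Finset.sum_congr rfl fun i _ => by ring
    _ ≤ ∑ i ∈ Finset.range (r + 1), r.choose i * (A i * ‖ξ‖ ^ (d - i)) *
        (C (r - i) M * ‖ξ‖ ^ (s - (r - i : ℕ))) :=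
      Finset.sum_le_sum fun i _ =>
        mul_le_mul (mul_le_mul_of_nonneg_left (hA i ξ hξ) (by positivity)) (hC _ _ ξ hξ)
          (by positivity) (mul_nonneg (by positivity) ((norm_nonneg _).trans (hA i ξ hξ)))
    _ = (∑ i ∈ Finset.range (r + 1), r.choose i * A i * C (r - i) M) * ‖ξ‖ ^ (d + s - r) := by
      rw [Finset.sum_mul]
      refine Finset.sum_congr rfl fun i hi => ?_
      have hexp : d + s - r = (d - i) + (s - (r - i : ℕ)) := by
        have := Finset.mem_range.mp hi
        omega
      rw [hexp, zpow_add₀ hpos.ne']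
      ring

theorem smul_homogeneous [FiniteDimensional ℝ E] {𝕜 : Type*} [NormedField 𝕜] [NormedAlgebra ℝ 𝕜]
    [NormedSpace 𝕜 F] [IsScalarTower ℝ 𝕜 F] (hh : IsSymbol s h) {d : ℤ} {a : E → 𝕜}
    (ha : ContDiffOn ℝ ∞ a {0}ᶜ) (hom : ∀ t : ℝ, 0 < t → ∀ ξ, a (t • ξ) = t ^ d • a ξ) :
    IsSymbol (d + s) fun ξ => a ξ • h ξ where
  contDiffOn := ha.smul hh.contDiffOn
  bound r M := by
    choose A hA using exists_norm_iteratedFDeriv_le_of_homogeneous ha hom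
    obtain ⟨C, hC⟩ := hh.exists_bound_smul (𝕜 := 𝕜) d A r M
    exact ⟨C, hC a ha hA⟩

end IsSymbol

theorem IsSymbol.exists_norm_iteratedFDeriv_comp_smul_le {h : E → F} (hh : IsSymbol 0 h) (r : ℕ) :
    ∃ C, ∀ t : ℝ, 0 < t → ∀ ξ ≠ 0,
      ‖iteratedFDeriv ℝ r (fun ξ => h (t • ξ)) ξ‖ ≤ C * ‖ξ‖ ^ (0 - r : ℤ) := by
  obtain ⟨C, hC⟩ := hh.bound r 0
  refine ⟨C, fun t ht ξ hξ => ?_⟩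
  have hle := hC (t • ξ) (smul_ne_zero ht.ne' hξ)
  rw [norm_smul, Real.norm_of_nonneg ht.le, mul_zpow, zero_sub, zpow_neg, zpow_natCast, pow_zero,
    one_mul, mul_left_comm, ← div_eq_inv_mul, le_div_iff₀' (pow_pos ht r)] at hle
  rwa [iteratedFDeriv_comp_smul _ ht.ne', norm_smul, norm_pow, Real.norm_of_nonneg ht.le, zero_sub]

theorem exists_cutoff (E : Type*) [NormedAddCommGroup E] [NormedSpace ℝ E]
    [FiniteDimensional ℝ E] :
    ∃ (χ : ℕ → E → ℝ) (A : ℕ → ℝ), (∀ N, ContDiff ℝ ∞ (χ N)) ∧ (∀ N, χ N =ᶠ[𝓝 0] 0) ∧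
      (∀ ξ ≠ 0, Tendsto (χ · ξ) atTop (𝓝 1)) ∧
      ∀ N i, ∀ ξ ≠ 0, ‖iteratedFDeriv ℝ i (χ N) ξ‖ ≤ A i * ‖ξ‖ ^ (0 - i : ℤ) := by
  let θ : ContDiffBump (0 : E) := default
  choose A₁ hA₁ using exists_norm_iteratedFDeriv_le_of_homogeneous (d := 0)
    (contDiffOn_const (𝕜 := ℝ) (c := (1 : ℝ)) (s := ({0}ᶜ : Set E))) (by simp)
  choose A₂ hA₂ using
    (IsSymbol.of_schwartz (θ.hasCompactSupport.toSchwartzMap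
      θ.contDiff)).exists_norm_iteratedFDeriv_comp_smul_le
  have hpos : ∀ N : ℕ, (0 : ℝ) < N + 1 := fun N => by positivity
  have hθ : ∀ N : ℕ, ContDiff ℝ ∞ fun ξ : E => θ ((N + 1 : ℝ) • ξ) := fun N =>
    θ.contDiff.comp (contDiff_const_smul _)
  refine ⟨fun N => (fun _ => 1) - fun ξ => θ ((N + 1 : ℝ) • ξ), fun i => A₁ i + A₂ i,
    fun N => contDiff_const.sub (hθ N), fun N => ?_, fun ξ hξ => ?_, fun N i ξ hξ => ?_⟩
  · have hcont : Tendsto (fun ξ : E => (N + 1 : ℝ) • ξ) (𝓝 0) (𝓝 0) := by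
      simpa using (continuous_const_smul (N + 1 : ℝ)).tendsto (0 : E)
    filter_upwards [hcont.eventually θ.eventuallyEq_one] with ξ hξ
    simp [hξ]
  · have hlarge : ∀ᶠ N : ℕ in atTop, θ.rOut ≤ (N + 1 : ℝ) * ‖ξ‖ :=
      ((tendsto_natCast_atTop_atTop.atTop_add tendsto_const_nhds).atTop_mul_const
        (norm_pos_iff.mpr hξ)).eventually_ge_atTop _
    refine tendsto_const_nhds.congr' (hlarge.mono fun N hN => ?_)
    have hzero : θ ((N + 1 : ℝ) • ξ) = 0 := θ.zero_of_le_dist (by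
      rwa [dist_zero_right, norm_smul, Real.norm_of_nonneg (hpos N).le])
    simp [hzero]
  · rw [iteratedFDeriv_sub_apply contDiffAt_const ((hθ N).of_le (mod_cast le_top)).contDiffAt,
      add_mul]
    exact (norm_sub_le _ _).trans (add_le_add (hA₁ i ξ hξ) (hA₂ i _ (hpos N) ξ hξ))

theorem IsSymbol.contDiff_smul_of_eventuallyEq_zero {s : ℤ} {h : E → F} (hh : IsSymbol s h)
    {χ : E → ℝ} (hχ : ContDiff ℝ ∞ χ) (hχ0 : χ =ᶠ[𝓝 0] 0) : ContDiff ℝ ∞ fun ξ => χ ξ • h ξ := by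
  refine contDiff_iff_contDiffAt.mpr fun ξ => ?_
  rcases eq_or_ne ξ 0 with rfl | hξ
  · refine (contDiffAt_const (c := 0)).congr_of_eventuallyEq (hχ0.mono fun ξ hξ => ?_)
    simp [hξ]
  · exact hχ.contDiffAt.smul (hh.contDiffOn.contDiffAt (isOpen_compl_singleton.mem_nhds hξ))

theorem exists_integrable_zpow_norm_mul [FiniteDimensional ℝ E] [Nontrivial E] [MeasurableSpace E]
    [BorelSpace E] {μ : Measure E} [μ.IsAddHaarMeasure] {d : ℤ} (hd : 0 < finrank ℝ E + d) :
    ∃ M : ℕ, Integrable (fun ξ : E => ‖ξ‖ ^ d * ((1 + ‖ξ‖) ^ M)⁻¹) μ := by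
  obtain ⟨q, hq⟩ := Int.eq_ofNat_of_zero_le (show 0 ≤ finrank ℝ E - 1 + d by omega)
  refine ⟨q + 2, (integrable_fun_norm_addHaar μ
    (f := fun y : ℝ => y ^ d * ((1 + y) ^ (q + 2))⁻¹)).mpr ?_⟩
  refine (integrable_inv_one_add_sq.integrableOn (s := Set.Ioi 0)).mono' ?_ ?_
  · refine ContinuousOn.aestronglyMeasurable (fun y (hy : 0 < y) => ?_) measurableSet_Ioi
    have : ContinuousAt (fun y : ℝ => y ^ d) y := continuousAt_zpow₀ _ _ (.inl hy.ne')
    have : (1 + y) ^ (q + 2) ≠ 0 := by positivity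
    exact ContinuousAt.continuousWithinAt (by fun_prop (disch := assumption))
  · refine (ae_restrict_mem measurableSet_Ioi).mono fun y (hy : 0 < y) => ?_
    have hn : ((finrank ℝ E - 1 : ℕ) : ℤ) = finrank ℝ E - 1 := by
      have := finrank_pos (R := ℝ) (M := E)
      omega
    rw [smul_eq_mul, ← mul_assoc, ← zpow_natCast, ← zpow_add₀ hy.ne', hn, hq, zpow_natCast,
      Real.norm_of_nonneg (by positivity), ← div_eq_mul_inv, inv_eq_one_div,
      div_le_div_iff₀ (by positivity) (by positivity), pow_add]
    calc y ^ q * (1 + y ^ 2) ≤ (1 + y) ^ q * (1 + y) ^ 2 := by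
          gcongr
          · linarith
          · nlinarith
      _ = 1 * ((1 + y) ^ q * (1 + y) ^ 2) := (one_mul _).symm

end Symbols

section FourierDecay

open Topology Module
open scoped ContDiff FourierTransform

variable {E F : Type*} [NormedAddCommGroup E] [InnerProductSpace ℝ E] [FiniteDimensional ℝ E]
  [MeasurableSpace E] [BorelSpace E] [NormedAddCommGroup F] [NormedSpace ℂ F]

theorem tendsto_fourier_of_dominated {ι : Type*} {l : Filter ι} [l.IsCountablyGenerated]
    {u : ι → E → F} {v : E → F} {B : E → ℝ} (hu : ∀ᶠ i in l, AEStronglyMeasurable (u i) volume)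
    (hB : Integrable B) (hle : ∀ᶠ i in l, ∀ᵐ ξ, ‖u i ξ‖ ≤ B ξ)
    (hlim : ∀ᵐ ξ, Tendsto (u · ξ) l (𝓝 (v ξ))) (x : E) :
    Tendsto (fun i => 𝓕 (u i) x) l (𝓝 (𝓕 v x)) := by
  simp only [Real.fourier_eq]
  refine tendsto_integral_filter_of_dominated_convergence B ?_ ?_ hB ?_
  · exact hu.mono fun i hi => (Real.continuous_fourierChar.comp
      (continuous_inner.comp (.prodMk_left x)).neg).aestronglyMeasurable.smul hi
  · exact hle.mono fun i hi => hi.mono fun ξ hξ => by rwa [Circle.norm_smul]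
  · exact hlim.mono fun ξ hξ => hξ.const_smul _

theorem pow_mul_norm_fourier_le_sum_integral {u : E → F} {r : ℕ} (hu : ContDiff ℝ r u)
    (hint : ∀ i ≤ r, Integrable (iteratedFDeriv ℝ i u)) (x : E) :
    ‖x‖ ^ r * ‖𝓕 u x‖ ≤ 2 ^ r * ∑ i ∈ Finset.range (r + 1), ∫ ξ, ‖iteratedFDeriv ℝ i u ξ‖ := by
  have hle := Real.pow_mul_norm_iteratedFDeriv_fourier_le (K := 0) (N := r) hu
    (fun k i hk hi => ?_) le_rfl le_rfl x
  · simpa using hle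
  · obtain rfl : k = 0 := by simpa using hk
    simpa using (hint i (mod_cast hi)).norm

variable [Nontrivial E] {s : ℤ} {h : E → F}

theorem IsSymbol.integrable_pow_smul (hh : IsSymbol s h) (hs : 0 < finrank ℝ E + s) (m : ℕ) :
    Integrable fun ξ => ‖ξ‖ ^ m • h ξ := by
  obtain ⟨M, hM⟩ := exists_integrable_zpow_norm_mul (μ := (volume : Measure E)) hs
  obtain ⟨C, hC⟩ := hh.bound 0 (M + m)
  have hmeas : AEStronglyMeasurable (fun ξ => ‖ξ‖ ^ m • h ξ) volume := by
    rw [← Measure.restrict_eq_self_of_ae_mem (Measure.ae_ne volume (0 : E))]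
    exact ((continuous_norm.pow m).continuousOn.smul
      hh.contDiffOn.continuousOn).aestronglyMeasurable (measurableSet_singleton 0).compl
  refine (hM.const_mul C).mono' hmeas ?_
  filter_upwards [Measure.ae_ne volume (0 : E)] with ξ hξ
  have hle := hC ξ hξ
  rw [norm_iteratedFDeriv_zero, Nat.cast_zero, sub_zero, pow_add, mul_assoc] at hle
  rw [← mul_assoc, ← div_eq_mul_inv, le_div_iff₀' (by positivity), norm_smul, norm_pow, norm_norm]
  refine le_trans ?_ hle
  gcongr
  linarith

theorem IsSymbol.exists_integral_norm_iteratedFDeriv_cutoff_le (hh : IsSymbol s h) (r : ℕ)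
    (hs : 0 < finrank ℝ E + s - r) {χ : ℕ → E → ℝ} {A : ℕ → ℝ} (hχ : ∀ N, ContDiff ℝ ∞ (χ N))
    (hχ0 : ∀ N, χ N =ᶠ[𝓝 0] 0)
    (hχA : ∀ N i, ∀ ξ ≠ 0, ‖iteratedFDeriv ℝ i (χ N) ξ‖ ≤ A i * ‖ξ‖ ^ (0 - i : ℤ)) :
    ∃ C, ∀ N, Integrable (iteratedFDeriv ℝ r fun ξ => χ N ξ • h ξ) ∧
      ∫ ξ, ‖iteratedFDeriv ℝ r (fun ξ => χ N ξ • h ξ) ξ‖ ≤ C := by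
  obtain ⟨M, hM⟩ := exists_integrable_zpow_norm_mul (μ := (volume : Measure E)) (d := 0 + s - r)
    (by omega)
  obtain ⟨C, hC⟩ := hh.exists_bound_smul (𝕜 := ℝ) 0 A r M
  have hle : ∀ N, ∀ᵐ ξ, ‖iteratedFDeriv ℝ r (fun ξ => χ N ξ • h ξ) ξ‖ ≤
      C * (‖ξ‖ ^ (0 + s - r) * ((1 + ‖ξ‖) ^ M)⁻¹) := fun N => by
    filter_upwards [Measure.ae_ne volume (0 : E)] with ξ hξ
    rw [← mul_assoc, ← div_eq_mul_inv, le_div_iff₀' (by positivity)]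
    exact hC (χ N) (hχ N).contDiffOn (hχA N) ξ hξ
  have hint : ∀ N, Integrable (iteratedFDeriv ℝ r fun ξ => χ N ξ • h ξ) := fun N =>
    (hM.const_mul C).mono' ((hh.contDiff_smul_of_eventuallyEq_zero (hχ N)
      (hχ0 N)).continuous_iteratedFDeriv (mod_cast le_top)).aestronglyMeasurable (hle N)
  exact ⟨_, fun N => ⟨hint N, integral_mono_ae (hint N).norm (hM.const_mul C) (hle N)⟩⟩

theorem IsSymbol.exists_pow_mul_norm_fourier_le (hh : IsSymbol s h) {r : ℕ}
    (hs : 0 < finrank ℝ E + s - r) : ∃ C, ∀ x, ‖x‖ ^ r * ‖𝓕 h x‖ ≤ C := by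
  obtain ⟨χ, A, hχ, hχ0, hχ1, hχA⟩ := exists_cutoff E
  have hχh : ∀ N, ContDiff ℝ ∞ fun ξ => χ N ξ • h ξ := fun N =>
    hh.contDiff_smul_of_eventuallyEq_zero (hχ N) (hχ0 N)
  have hbound : ∀ i : ℕ, ∃ C, i ≤ r → ∀ N, Integrable (iteratedFDeriv ℝ i fun ξ => χ N ξ • h ξ) ∧
      ∫ ξ, ‖iteratedFDeriv ℝ i (fun ξ => χ N ξ • h ξ) ξ‖ ≤ C := fun i => by
    by_cases hi : i ≤ r
    · obtain ⟨C, hC⟩ := hh.exists_integral_norm_iteratedFDeriv_cutoff_le i (by omega) hχ hχ0 hχA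
      exact ⟨C, fun _ => hC⟩
    · exact ⟨0, fun h => absurd h hi⟩
  choose C hC using hbound
  have hcut : ∀ N x, ‖x‖ ^ r * ‖𝓕 (fun ξ => χ N ξ • h ξ) x‖ ≤
      2 ^ r * ∑ i ∈ Finset.range (r + 1), C i := fun N x => by
    refine (pow_mul_norm_fourier_le_sum_integral ((hχh N).of_le (mod_cast le_top))
      (fun i hi => (hC i hi N).1) x).trans ?_
    gcongr with i hi
    exact (hC i (Finset.mem_range_succ_iff.mp hi) N).2
  have hlim : ∀ x, Tendsto (fun N => 𝓕 (fun ξ => χ N ξ • h ξ) x) atTop (𝓝 (𝓕 h x)) := by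
    refine tendsto_fourier_of_dominated (B := fun ξ => A 0 * ‖h ξ‖) ?_ ?_ ?_ ?_
    · exact .of_forall fun N => (hχh N).continuous.aestronglyMeasurable
    · simpa using ((hh.integrable_pow_smul (by omega) 0).norm.const_mul (A 0))
    · refine .of_forall fun N => ?_
      filter_upwards [Measure.ae_ne volume (0 : E)] with ξ hξ
      rw [norm_smul]
      gcongr
      simpa using hχA N 0 ξ hξ
    · filter_upwards [Measure.ae_ne volume (0 : E)] with ξ hξ
      simpa using (hχ1 ξ hξ).smul_const (h ξ)
  exact ⟨_, fun x => le_of_tendsto ((hlim x).norm.const_mul _) (.of_forall fun N => hcut N x)⟩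

theorem IsSymbol.exists_norm_fourier_le (hh : IsSymbol s h) {r : ℕ}
    (hs : 0 < finrank ℝ E + s - r) : ∃ C, ∀ x, (1 + ‖x‖) ^ r * ‖𝓕 h x‖ ≤ C := by
  obtain ⟨C, hC⟩ := hh.exists_pow_mul_norm_fourier_le hs
  obtain ⟨C₀, hC₀⟩ := hh.exists_pow_mul_norm_fourier_le (r := 0) (by omega)
  refine ⟨2 ^ (r - 1) * (C₀ + C), fun x => ?_⟩
  calc (1 + ‖x‖) ^ r * ‖𝓕 h x‖ ≤ 2 ^ (r - 1) * (1 ^ r + ‖x‖ ^ r) * ‖𝓕 h x‖ := by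
        gcongr
        exact add_pow_le zero_le_one (norm_nonneg x) r
    _ = 2 ^ (r - 1) * (‖x‖ ^ 0 * ‖𝓕 h x‖ + ‖x‖ ^ r * ‖𝓕 h x‖) := by ring
    _ ≤ 2 ^ (r - 1) * (C₀ + C) := by
        gcongr
        exacts [hC₀ x, hC x]

end FourierDecay

section FourierSide

open Topology Module Complex
open scoped ContDiff FourierTransform SchwartzMap Real

variable {n m : ℕ}

/-- Symbols of order `s` on `ℝⁿ`, a filtration of the Fourier side. -/
def symbols (n : ℕ) (s : ℤ) : Submodule ℝ (En n → ℂ) where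
  carrier := {h | IsSymbol s h}
  add_mem' (ha : IsSymbol s _) (hb : IsSymbol s _) := ha.add hb
  zero_mem' := IsSymbol.zero
  smul_mem' c _ (ha : IsSymbol s _) := ha.const_smul c

/-- The partial derivative `∂/∂x^j` on the Fourier side: multiplication by `2πi ξ_j`. -/
def fourierDeriv (j : Fin n) : Module.End ℝ (En n → ℂ) :=
  LinearMap.mulLeft ℝ fun ξ => 2 * π * I * ξ j

/-- The inverse of the `N`-th power of the Laplacian on the Fourier side: multiplication by
`((2πi)²‖ξ‖²)⁻ᴺ`, which vanishes at the origin if `N ≠ 0`. -/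
def fourierInvLap (N : ℕ) : Module.End ℝ (En n → ℂ) :=
  LinearMap.mulLeft ℝ fun ξ => ((2 * π * I) ^ 2 * (‖ξ‖ ^ 2 : ℝ))⁻¹ ^ N

@[simp]
theorem fourierDeriv_apply (j : Fin n) (h : En n → ℂ) (ξ : En n) :
    fourierDeriv j h ξ = 2 * π * I * ξ j * h ξ :=
  rfl

theorem commute_fourierDeriv (i j : Fin n) :
    Commute (fourierDeriv (n := n) i) (fourierDeriv j) :=
  LinearMap.ext fun h => mul_left_comm _ _ h

theorem fourierInvLap_fourierDeriv (N : ℕ) (j : Fin n) (h : En n → ℂ) :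
    fourierInvLap N (fourierDeriv j h) = fourierDeriv j (fourierInvLap N h) :=
  mul_left_comm _ _ h

theorem lap_fourierDeriv_apply (h : En n → ℂ) (ξ : En n) :
    SymTensor.lap fourierDeriv h ξ = (2 * π * I) ^ 2 * (‖ξ‖ ^ 2 : ℝ) * h ξ := by
  simp only [SymTensor.lap, pow_two, LinearMap.sum_apply, Finset.sum_apply, Module.End.mul_apply,
    fourierDeriv_apply]
  rw [← pow_two ‖ξ‖, EuclideanSpace.real_norm_sq_eq, ofReal_sum, Finset.mul_sum, Finset.sum_mul]
  refine Finset.sum_congr rfl fun j _ => ?_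
  push_cast
  ring

theorem fourierInvLap_lap_pow_apply (N : ℕ) (h : En n → ℂ) {ξ : En n} (hξ : ξ ≠ 0) :
    fourierInvLap N ((SymTensor.lap fourierDeriv ^ N) h) ξ = h ξ := by
  have hlap : (SymTensor.lap fourierDeriv ^ N) h ξ
      = ((2 * π * I) ^ 2 * (‖ξ‖ ^ 2 : ℝ)) ^ N * h ξ := by
    induction N with
    | zero => simp
    | succ N ih => rw [pow_succ', Module.End.mul_apply, lap_fourierDeriv_apply, ih, pow_succ']; ring
  have hne : (2 * π * I) ^ 2 * (‖ξ‖ ^ 2 : ℝ) ≠ 0 := by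
    simp [Real.pi_ne_zero, hξ]
  change (_ : ℂ)⁻¹ ^ N * _ = _
  rw [hlap, ← mul_assoc, ← mul_pow, inv_mul_cancel₀ hne, one_pow, one_mul]

theorem fourierDeriv_mem_symbols (s : ℤ) (j : Fin n) (h : En n → ℂ) (hh : h ∈ symbols n s) :
    fourierDeriv j h ∈ symbols n (s + 1) := by
  have hsmooth : ContDiff ℝ ∞ fun ξ : En n => 2 * π * I * ξ j :=
    contDiff_const.mul (ofRealCLM.contDiff.comp (EuclideanSpace.proj (𝕜 := ℝ) j).contDiff)
  rw [add_comm]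
  refine IsSymbol.smul_homogeneous hh hsmooth.contDiffOn fun t _ ξ => ?_
  simp only [PiLp.smul_apply, smul_eq_mul, ofReal_mul, zpow_one, real_smul]
  ring

theorem fourierInvLap_mem_symbols {s : ℤ} (N : ℕ) {h : En n → ℂ} (hh : h ∈ symbols n s) :
    fourierInvLap N h ∈ symbols n (s - 2 * N) := by
  have hsmooth : ContDiffOn ℝ ∞
      (fun ξ : En n => ((2 * π * I) ^ 2 * (‖ξ‖ ^ 2 : ℝ))⁻¹ ^ N) {0}ᶜ := fun ξ hξ => by
    have hnorm : ContDiffAt ℝ ∞ (fun ξ : En n => ((‖ξ‖ ^ 2 : ℝ) : ℂ)) ξ :=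
      (ofRealCLM.contDiff.comp (contDiff_norm_sq ℝ)).contDiffAt
    have hne : (2 * π * I) ^ 2 * ((‖ξ‖ ^ 2 : ℝ) : ℂ) ≠ 0 := by
      simpa [Real.pi_ne_zero] using hξ
    exact (((contDiffAt_const.mul hnorm).inv hne).pow N).contDiffWithinAt
  rw [sub_eq_neg_add]
  refine IsSymbol.smul_homogeneous hh hsmooth fun t ht ξ => ?_
  have hexp : t ^ (-(2 * N : ℤ)) = (t ^ 2)⁻¹ ^ N := by
    rw [zpow_neg, zpow_mul, zpow_natCast, inv_pow]
    norm_cast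
  rw [hexp, norm_smul, Real.norm_of_nonneg ht.le, real_smul, mul_pow t, ofReal_mul,
    mul_left_comm, mul_inv, mul_pow]
  push_cast
  rfl

/-- The Fourier transform of the potential `v` of the decomposition `f = g + d^k v` in terms of the
Fourier transform of `f`: the solution of the normal equation `δ^k d^k v = δ^k f`. -/
def fourierPotential (k : ℕ) (f : SymTensor n (En n → ℂ) (m + k)) : SymTensor n (En n → ℂ) m :=
  SymTensor.map (fourierInvLap (k * (m + 1)))
    (SymTensor.divDAdj fourierDeriv m k (SymTensor.divPow fourierDeriv k f))

theorem hasOrder_fourierPotential {k : ℕ} {f : SymTensor n (En n → ℂ) (m + k)}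
    (hf : SymTensor.HasOrder (symbols n) 0 f) :
    SymTensor.HasOrder (symbols n) (-k) (fourierPotential k f) := fun i => by
  have hadj := SymTensor.HasOrder.divDAdj fourierDeriv_mem_symbols
    (SymTensor.HasOrder.divPow fourierDeriv_mem_symbols hf) k
  have hexp : (-k : ℤ) = 0 + k + 2 * m * k - 2 * (k * (m + 1) : ℕ) := by push_cast; ring
  rw [hexp]
  exact fourierInvLap_mem_symbols _ (hadj i)

theorem divPow_dPow_fourierPotential_apply {k : ℕ} (f : SymTensor n (En n → ℂ) (m + k))
    (i : Fin m → Fin n) {ξ : En n} (hξ : ξ ≠ 0) :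
    (SymTensor.divPow fourierDeriv k (SymTensor.dPow fourierDeriv k (fourierPotential k f))).1 i ξ
      = (SymTensor.divPow fourierDeriv k f).1 i ξ := by
  have hcomm := fourierInvLap_fourierDeriv (n := n) (k * (m + 1))
  rw [fourierPotential, ← SymTensor.map_dPow hcomm, ← SymTensor.map_divPow hcomm,
    SymTensor.divPow_dPow_divDAdj commute_fourierDeriv]
  exact fourierInvLap_lap_pow_apply _ _ hξ

/-- The functions on the Fourier side with integrable moments, whose inverse Fourier transforms are
smooth. -/
def integrableMoments (n : ℕ) : Submodule ℝ (En n → ℂ) where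
  carrier := {h | ∀ m : ℕ, Integrable fun ξ => ‖ξ‖ ^ m • h ξ}
  add_mem' ha hb m := ((ha m).add (hb m)).congr (.of_forall fun _ => (smul_add _ _ _).symm)
  zero_mem' m := by simp
  smul_mem' c _ ha m := by simpa only [Pi.smul_def, smul_comm c] using (ha m).smul c

instance : AddCommGroup (integrableMoments n) :=
  Submodule.addCommGroup _

theorem mem_integrableMoments {h : En n → ℂ} :
    h ∈ integrableMoments n ↔ ∀ m : ℕ, Integrable fun ξ => ‖ξ‖ ^ m • h ξ :=
  Iff.rfl

theorem symbols_le_integrableMoments [NeZero n] {s : ℤ} (hs : 0 < n + s) :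
    symbols n s ≤ integrableMoments n := fun h (hh : IsSymbol s h) =>
  have : Nonempty (Fin n) := ⟨0⟩
  mem_integrableMoments.mpr (hh.integrable_pow_smul (by simpa using hs))

theorem fourierDeriv_mem_integrableMoments (j : Fin n) (h : En n → ℂ)
    (hh : h ∈ integrableMoments n) : fourierDeriv j h ∈ integrableMoments n := fun m => by
  rw [mem_integrableMoments] at hh
  have hmeas : AEStronglyMeasurable (fun ξ => ‖ξ‖ ^ m • fourierDeriv j h ξ) volume := by
    have h0 := (hh 0).aestronglyMeasurable
    simp only [pow_zero, one_smul] at h0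
    exact (by fun_prop : Continuous fun ξ : En n => ‖ξ‖ ^ m).aestronglyMeasurable.smul
      ((by fun_prop : Continuous fun ξ : En n => 2 * π * I * ξ j).aestronglyMeasurable.mul h0)
  refine ((hh (m + 1)).norm.const_mul (2 * π)).mono' hmeas (.of_forall fun ξ => ?_)
  rw [norm_smul, norm_smul, fourierDeriv_apply, norm_mul, norm_mul, norm_pow, norm_pow, norm_norm,
    norm_real]
  have : ‖(2 * π * I : ℂ)‖ = 2 * π := by simp [abs_of_pos Real.pi_pos]
  rw [this]
  calc ‖ξ‖ ^ m * (2 * π * ‖ξ j‖ * ‖h ξ‖) ≤ ‖ξ‖ ^ m * (2 * π * ‖ξ‖ * ‖h ξ‖) := by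
        gcongr
        exact PiLp.norm_apply_le ξ j
    _ = 2 * π * (‖ξ‖ ^ (m + 1) * ‖h ξ‖) := by ring

/-- The partial derivative `∂/∂x^j` on the Fourier side, restricted to functions with integrable
moments. -/
def momentDeriv (j : Fin n) : Module.End ℝ (integrableMoments n) :=
  (fourierDeriv j).restrict (fourierDeriv_mem_integrableMoments j)

theorem integrable_of_mem_integrableMoments {h : En n → ℂ} (hh : h ∈ integrableMoments n) :
    Integrable h := by
  simpa using mem_integrableMoments.mp hh 0

theorem fourierInv_eq_fourier_comp_neg (h : En n → ℂ) : 𝓕⁻ h = 𝓕 h ∘ Neg.neg :=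
  funext (Real.fourierInv_eq_fourier_neg h)

theorem contDiff_fourierInv {h : En n → ℂ} (hh : h ∈ integrableMoments n) :
    ContDiff ℝ ∞ (𝓕⁻ h) := by
  rw [fourierInv_eq_fourier_comp_neg]
  refine (Real.contDiff_fourier fun m _ => ?_).comp contDiff_neg
  simpa [norm_smul] using (mem_integrableMoments.mp hh m).norm

theorem tendsto_fourierInv_cocompact (h : En n → ℂ) :
    Tendsto (𝓕⁻ h) (cocompact (En n)) (𝓝 0) := by
  rw [fourierInv_eq_fourier_comp_neg]
  exact Tendsto.comp (g := 𝓕 h) (tendsto_integral_exp_inner_smul_cocompact h)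
    (Homeomorph.neg (En n)).isClosedEmbedding.tendsto_cocompact

theorem fderiv_fourierInv {h : En n → ℂ} (hh : h ∈ integrableMoments n) (x : En n) (j : Fin n) :
    fderiv ℝ (𝓕⁻ h) x (EuclideanSpace.single j 1) = 𝓕⁻ (fourierDeriv j h) x := by
  have hint : Integrable h := integrable_of_mem_integrableMoments hh
  have hint1 : Integrable fun ξ => ‖ξ‖ * ‖h ξ‖ := by
    simpa [norm_smul] using (mem_integrableMoments.mp hh 1).norm
  have hsmul : Integrable (VectorFourier.fourierSMulRight (innerSL ℝ) h) := by
    refine (hint1.const_mul (2 * π * ‖innerSL (E := En n) ℝ‖)).mono' hint.1.fourierSMulRight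
      (.of_forall fun ξ => ?_)
    exact (VectorFourier.norm_fourierSMulRight_le _ _ _).trans_eq (by ring)
  have hderiv : HasFDerivAt (𝓕⁻ h) (-𝓕 (VectorFourier.fourierSMulRight (innerSL ℝ) h) (-x)) x := by
    rw [fourierInv_eq_fourier_comp_neg]
    simpa using (Real.hasFDerivAt_fourier hint hint1 (-x)).comp x (hasFDerivAt_id x).neg
  rw [hderiv.fderiv, neg_apply, Real.fourier_continuousLinearMap_apply hsmul,
    Real.fourierInv_eq_fourier_neg, Real.fourier_eq', Real.fourier_eq', ← integral_neg]
  refine integral_congr_ae (.of_forall fun ξ => ?_)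
  have hinner : innerSL ℝ ξ (EuclideanSpace.single j 1) = ξ j := by
    simp [EuclideanSpace.inner_single_right]
  simp only [VectorFourier.fourierSMulRight_apply, hinner, fourierDeriv_apply, smul_eq_mul,
    real_smul]
  ring

theorem fourierInv_congr_ae {h h' : En n → ℂ} (hae : h =ᵐ[volume] h') : 𝓕⁻ h = 𝓕⁻ h' := by
  funext x
  rw [Real.fourierInv_eq, Real.fourierInv_eq]
  exact integral_congr_ae (hae.mono fun ξ hξ => congrArg _ hξ)

/-- The real part of the inverse Fourier transform. -/
def fourierInvRe : integrableMoments n →ₗ[ℝ] SmoothFun n where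
  toFun h := ⟨fun x => (𝓕⁻ (h : En n → ℂ) x).re, reCLM.contDiff.comp (contDiff_fourierInv h.2)⟩
  map_add' h h' := by
    ext x
    have hint (h : integrableMoments n) :=
      (Real.fourierIntegral_convergent_iff (-x)).2 (integrable_of_mem_integrableMoments h.2)
    simp only [inner_neg_right, neg_neg] at hint
    change (𝓕⁻ (fun ξ => h.1 ξ + h'.1 ξ) x).re = (𝓕⁻ h.1 x).re + (𝓕⁻ h'.1 x).re
    simp only [Real.fourierInv_eq, smul_add]
    rw [integral_add (hint h) (hint h'), add_re]
  map_smul' c h := by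
    ext x
    change (𝓕⁻ (fun ξ => c • h.1 ξ) x).re = c • (𝓕⁻ h.1 x).re
    simp only [Real.fourierInv_eq, smul_comm _ c]
    rw [integral_smul, smul_re]

theorem fourierInvRe_apply (h : integrableMoments n) (x : En n) :
    (fourierInvRe h : En n → ℝ) x = (𝓕⁻ (h : En n → ℂ) x).re :=
  rfl

theorem fourierInvRe_momentDeriv (j : Fin n) (h : integrableMoments n) :
    fourierInvRe (momentDeriv j h) = SmoothFun.partialDeriv j (fourierInvRe h) := by
  ext x
  have hdiff : DifferentiableAt ℝ (𝓕⁻ (h : En n → ℂ)) x :=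
    (contDiff_fourierInv h.2).differentiable (by simp) x
  change _ = fderiv ℝ (reCLM ∘ 𝓕⁻ (h : En n → ℂ)) x _
  rw [fderiv_comp x reCLM.differentiableAt hdiff, reCLM.fderiv, ContinuousLinearMap.comp_apply,
    fderiv_fourierInv h.2]
  rfl

theorem tendsto_fourierInvRe (h : integrableMoments n) :
    Tendsto (fourierInvRe h : En n → ℝ) (cocompact (En n)) (𝓝 0) :=
  (continuous_re.tendsto 0).comp (tendsto_fourierInv_cocompact _)

theorem fourierInvRe_eq_zero [NeZero n] {h : integrableMoments n}
    (hzero : ∀ ξ ≠ 0, (h : En n → ℂ) ξ = 0) : fourierInvRe h = 0 := by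
  have : Nonempty (Fin n) := ⟨0⟩
  have hae : (h : En n → ℂ) =ᵐ[volume] 0 := (Measure.ae_ne volume (0 : En n)).mono hzero
  ext x
  rw [fourierInvRe_apply, fourierInv_congr_ae hae]
  simp [Real.fourierInv_eq]

theorem fourierInvRe_fourier_ofReal (φ : 𝓢(En n, ℝ)) {h : integrableMoments n}
    (hh : (h : En n → ℂ) = 𝓕 fun x => (φ x : ℂ)) : (fourierInvRe h : En n → ℝ) = φ := by
  let Φ : 𝓢(En n, ℂ) := SchwartzMap.postcompCLM (𝕜 := ℝ) ofRealCLM φ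
  have hinv : 𝓕⁻ (𝓕 (Φ : En n → ℂ)) = Φ := by
    rw [← SchwartzMap.fourier_coe, ← SchwartzMap.fourierInv_coe, FourierPair.fourierInv_fourier_eq]
  funext x
  rw [fourierInvRe_apply, hh]
  exact (congrArg re (congrFun hinv x)).trans (ofReal_re _)

theorem exists_fourierInvRe_le [NeZero n] {s : ℤ} (hs : 0 < n + s) {h : integrableMoments n}
    (hh : (h : En n → ℂ) ∈ symbols n s) :
    ∃ C, ∀ x, |(fourierInvRe h : En n → ℝ) x| ≤ C * (1 + ‖x‖) ^ ((1 : ℝ) - n - s) := by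
  have : Nonempty (Fin n) := ⟨0⟩
  obtain ⟨r, hr⟩ := Int.eq_ofNat_of_zero_le (show 0 ≤ n + s - 1 by omega)
  have hr' : (1 : ℝ) - n - s = -(r : ℝ) := by
    have : ((n + s - 1 : ℤ) : ℝ) = r := by rw [hr]; simp
    push_cast at this
    linarith
  obtain ⟨C, hC⟩ := IsSymbol.exists_norm_fourier_le hh (r := r) (by simp; omega)
  refine ⟨C, fun x => ?_⟩
  have hle := hC (-x)
  rw [norm_neg] at hle
  rw [hr', Real.rpow_neg (by positivity), Real.rpow_natCast, ← div_eq_mul_inv,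
    le_div_iff₀' (by positivity), fourierInvRe_apply, Real.fourierInv_eq_fourier_neg]
  refine le_trans ?_ hle
  gcongr
  exact abs_re_le_norm _

theorem exists_map_fourierInvRe_eq [NeZero n] {f : (Fin m → Fin n) → En n → ℝ}
    (hf : IsSchwartzField f) (hsym : IsSymField f) : ∃ F : SymTensor n (integrableMoments n) m,
      SymTensor.HasOrder (symbols n) 0 (SymTensor.map (integrableMoments n).subtype F) ∧
      SmoothFun.toField (SymTensor.map fourierInvRe F) = f := by
  choose φ hφ using hf
  have hsymbol (i) : 𝓕 (fun x => (f i x : ℂ)) ∈ symbols n 0 := by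
    have hcoe := SchwartzMap.fourier_coe (SchwartzMap.postcompCLM (𝕜 := ℝ) ofRealCLM (φ i))
    rw [← hφ i]
    exact hcoe ▸ IsSymbol.of_schwartz _
  have hmem (i) := symbols_le_integrableMoments (by simp [NeZero.pos n]) (hsymbol i)
  refine ⟨⟨fun i => ⟨_, hmem i⟩, fun τ i => ?_⟩, hsymbol, funext fun i => ?_⟩
  · simp only [hsym τ i]
  · exact (fourierInvRe_fourier_ofReal (φ i) (by simp [hφ])).trans (hφ i)

theorem map_subtype_dPow_momentDeriv (k : ℕ) (F : SymTensor n (integrableMoments n) m) :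
    SymTensor.map (integrableMoments n).subtype (SymTensor.dPow momentDeriv k F) =
      SymTensor.dPow fourierDeriv k (SymTensor.map (integrableMoments n).subtype F) :=
  SymTensor.map_dPow (D := momentDeriv) (D' := fourierDeriv) (T := (integrableMoments n).subtype)
    (fun _ _ => rfl) k F

theorem map_subtype_divPow_momentDeriv {k : ℕ} (F : SymTensor n (integrableMoments n) (m + k)) :
    SymTensor.map (integrableMoments n).subtype (SymTensor.divPow momentDeriv k F) =
      SymTensor.divPow fourierDeriv k (SymTensor.map (integrableMoments n).subtype F) :=
  SymTensor.map_divPow (D := momentDeriv) (D' := fourierDeriv)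
    (T := (integrableMoments n).subtype) (fun _ _ => rfl) k F

theorem exists_divPow_map_fourierInvRe_sub_eq_zero [NeZero n] {k : ℕ} (hk : k < n)
    {F : SymTensor n (integrableMoments n) (m + k)}
    (hF : SymTensor.HasOrder (symbols n) 0 (SymTensor.map (integrableMoments n).subtype F)) :
    ∃ V : SymTensor n (integrableMoments n) m,
      SymTensor.HasOrder (symbols n) (-k) (SymTensor.map (integrableMoments n).subtype V) ∧
      SymTensor.divPow SmoothFun.partialDeriv k
        (SymTensor.map fourierInvRe (F - SymTensor.dPow momentDeriv k V)) = 0 := by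
  have hV := hasOrder_fourierPotential hF
  let V := SymTensor.codRestrict _ _ fun i => symbols_le_integrableMoments (by omega) (hV i)
  refine ⟨V, hV, ?_⟩
  rw [← SymTensor.map_divPow fourierInvRe_momentDeriv]
  refine SymTensor.ext fun i => fourierInvRe_eq_zero fun ξ hξ => ?_
  have hsolve := divPow_dPow_fourierPotential_apply
    (SymTensor.map (integrableMoments n).subtype F) i hξ
  change (SymTensor.map (integrableMoments n).subtype _).1 i ξ = 0
  rw [map_subtype_divPow_momentDeriv, map_sub, map_sub, map_subtype_dPow_momentDeriv]
  exact sub_eq_zero.mpr hsolve.symm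

theorem tensNorm_le_sum_abs (F : (Fin m → Fin n) → ℝ) : tensNorm F ≤ ∑ i, |F i| := by
  rw [tensNorm, Real.sqrt_le_left (Finset.sum_nonneg fun i _ => abs_nonneg _)]
  simpa using Finset.sum_sq_le_sq_sum_of_nonneg fun i (_ : i ∈ Finset.univ) => abs_nonneg (F i)

theorem exists_tensNorm_map_fourierInvRe_le [NeZero n] {s : ℤ} (hs : 0 < n + s)
    {F : SymTensor n (integrableMoments n) m}
    (hF : SymTensor.HasOrder (symbols n) s (SymTensor.map (integrableMoments n).subtype F)) :
    ∃ C, ∀ x, tensNorm (fun i => SmoothFun.toField (SymTensor.map fourierInvRe F) i x) ≤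
      C * (1 + ‖x‖) ^ ((1 : ℝ) - n - s) := by
  choose C hC using fun i => exists_fourierInvRe_le hs (hF i)
  refine ⟨∑ i, C i, fun x => (tensNorm_le_sum_abs _).trans ?_⟩
  rw [Finset.sum_mul]
  exact Finset.sum_le_sum fun i _ => hC i x

theorem exists_tensNorm_decomposition_le [NeZero n] {k : ℕ} (hk : k < n)
    {F : SymTensor n (integrableMoments n) (m + k)} {V : SymTensor n (integrableMoments n) m}
    (hF : SymTensor.HasOrder (symbols n) 0 (SymTensor.map (integrableMoments n).subtype F))
    (hV : SymTensor.HasOrder (symbols n) (-k) (SymTensor.map (integrableMoments n).subtype V)) :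
    ∃ C, (∀ x, tensNorm (fun i => SmoothFun.toField
        (SymTensor.map fourierInvRe (F - SymTensor.dPow momentDeriv k V)) i x) ≤
          C * (1 + ‖x‖) ^ ((1 : ℝ) - n)) ∧
      ∀ ℓ, ℓ ≤ k → ∀ x, tensNorm (fun i => dpow ℓ
        (SmoothFun.toField (SymTensor.map fourierInvRe V)) i x) ≤
          C * (1 + ‖x‖) ^ ((k : ℝ) + 1 - ℓ - n) := by
  have hdV (ℓ : ℕ) : SymTensor.HasOrder (symbols n) (-k + ℓ)
      (SymTensor.map (integrableMoments n).subtype (SymTensor.dPow momentDeriv ℓ V)) := by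
    rw [map_subtype_dPow_momentDeriv]
    exact SymTensor.HasOrder.dPow fourierDeriv_mem_symbols hV ℓ
  have hG : SymTensor.HasOrder (symbols n) 0
      (SymTensor.map (integrableMoments n).subtype (F - SymTensor.dPow momentDeriv k V)) := by
    rw [map_sub]
    exact hF.sub (neg_add_cancel (k : ℤ) ▸ hdV k)
  obtain ⟨C₀, hC₀⟩ := exists_tensNorm_map_fourierInvRe_le (by omega) hG
  choose C hC using fun ℓ => exists_tensNorm_map_fourierInvRe_le (by omega) (hdV ℓ)
  obtain ⟨B, hB⟩ := ((Set.finite_Iic k).image C).bddAbove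
  refine ⟨max C₀ B, fun x => (hC₀ x).trans ?_, fun ℓ hℓ x => ?_⟩
  · rw [Int.cast_zero, sub_zero]
    gcongr
    exact le_max_left _ _
  · have hexp : (k : ℝ) + 1 - ℓ - n = 1 - n - (-k + ℓ : ℤ) := by push_cast; ring
    rw [hexp, ← SmoothFun.toField_dPow, ← SymTensor.map_dPow fourierInvRe_momentDeriv]
    refine (hC ℓ x).trans ?_
    gcongr
    exact (hB ⟨ℓ, hℓ, rfl⟩).trans (le_max_right _ _)

end FourierSide

/-- decomposition of a Schwartz symmetric `m`-tensor field into its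
`k`-solenoidal part `g` and `k`-potential part `d^k v`, with decay estimates and
uniqueness.  The rank is `m = p + k` (so `k ≤ m`), and `k ≤ n − 1` is expressed
as `k + 1 ≤ n`. -/
theorem k_solenoidal_k_potential_decomposition
    (n p k : ℕ) (hk1 : 1 ≤ k) (hkn : k + 1 ≤ n)
    (f : (Fin (p + k) → Fin n) → En n → ℝ)
    (hf : IsSchwartzField f) (hfsym : IsSymField f) :
    ∃ (g : (Fin (p + k) → Fin n) → En n → ℝ) (v : (Fin p → Fin n) → En n → ℝ),
      ((∀ i, ContDiff ℝ (⊤ : ℕ∞) (g i)) ∧ (∀ j, ContDiff ℝ (⊤ : ℕ∞) (v j)) ∧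
        IsSymField g ∧ IsSymField v ∧
        (∀ i x, f i x = g i x + dpow k v i x) ∧
        (∀ i x, divpow k (p := p) g i x = 0) ∧
        (∀ i, Tendsto (g i) (cocompact (En n)) (nhds 0)) ∧
        (∀ j, Tendsto (v j) (cocompact (En n)) (nhds 0))) ∧
      (∃ C : ℝ,
        (∀ x, tensNorm (fun i => g i x) ≤ C * (1 + ‖x‖) ^ ((1 : ℝ) - n)) ∧
        (∀ ℓ, ℓ ≤ k → ∀ x,
          tensNorm (fun i => dpow ℓ v i x) ≤ C * (1 + ‖x‖) ^ ((k : ℝ) + 1 - ℓ - n))) ∧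
      (∀ (g' : (Fin (p + k) → Fin n) → En n → ℝ) (v' : (Fin p → Fin n) → En n → ℝ),
        ((∀ i, ContDiff ℝ (⊤ : ℕ∞) (g' i)) ∧ (∀ j, ContDiff ℝ (⊤ : ℕ∞) (v' j)) ∧
          IsSymField g' ∧ IsSymField v' ∧
          (∀ i x, f i x = g' i x + dpow k v' i x) ∧
          (∀ i x, divpow k (p := p) g' i x = 0) ∧
          (∀ i, Tendsto (g' i) (cocompact (En n)) (nhds 0)) ∧
          (∀ j, Tendsto (v' j) (cocompact (En n)) (nhds 0))) →
        g' = g ∧ v' = v) := by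
  have : NeZero n := ⟨by omega⟩
  obtain ⟨F, hF, rfl⟩ := exists_map_fourierInvRe_eq hf hfsym
  obtain ⟨V, hV, hG⟩ := exists_divPow_map_fourierInvRe_sub_eq_zero hkn hF
  have hsum : SymTensor.map fourierInvRe F =
      SymTensor.map fourierInvRe (F - SymTensor.dPow momentDeriv k V) +
        SymTensor.dPow SmoothFun.partialDeriv k (SymTensor.map fourierInvRe V) := by
    rw [map_sub, SymTensor.map_dPow fourierInvRe_momentDeriv, sub_add_cancel]
  refine ⟨_, _, ⟨fun _ => SmoothFun.contDiff _, fun _ => SmoothFun.contDiff _,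
    SmoothFun.isSymField_toField _, SmoothFun.isSymField_toField _,
    SmoothFun.eq_add_dPow_iff.mp hsum, SmoothFun.divPow_eq_zero_iff.mp hG,
    fun _ => tendsto_fourierInvRe _, fun _ => tendsto_fourierInvRe _⟩,
    exists_tensNorm_decomposition_le hkn hF hV, ?_⟩
  rintro g' v' ⟨hg', hv', hgsym', hvsym', hsum', hdiv', -, hlim'⟩
  obtain ⟨g', rfl⟩ := SmoothFun.exists_toField_eq hg' hgsym'
  obtain ⟨v', rfl⟩ := SmoothFun.exists_toField_eq hv' hvsym'
  obtain ⟨rfl, rfl⟩ := SmoothFun.decomposition_unique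
    (hsum.symm.trans (SmoothFun.eq_add_dPow_iff.mpr hsum')) hG
    (SmoothFun.divPow_eq_zero_iff.mpr hdiv') (fun _ => tendsto_fourierInvRe _) hlim'
  exact ⟨rfl, rfl⟩
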